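/- arXiv:2107.08830 — 2 statements merged into one kernel-verified Lean document; each statement's English description precedes it below -/
import Mathlib

section
/- Let m ≥ 1, let K be an invertible m × m complex matrix, let λ₁, …, λ_m ∈ ℂ satisfy Re λ_l < 0 for every l, and let 0 < β₀ < 1. Then there exists T₀ > 1 such that for every t₀ ≥ T₀ the following holds: if d ∈ ℂ^m is such that for every l the l-th component b_l of the vector K⁻¹·d lies in the image of [β₀, 1) under ρ ↦ E_ρ(λ_l·t₀^ρ), then there exists a unique vector B = (β₁*, …, β_m*) with β_l* ∈ [β₀, 1] for every l such that ∑_{l=1}^m K_{j,l} · E_{β_l*}(λ_l·t₀^{β_l*}) = d_j for every j = 1, …, m. -/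
/-- The (one-parameter) Mittag-Leffler function `E_β(z) = ∑ₖ zᵏ / Γ(βk + 1)`. -/
noncomputable def mittagLeffler (β : ℝ) (z : ℂ) : ℂ :=
  ∑' k : ℕ, z ^ k / Complex.Gamma (β * k + 1)

namespace MLProof

open Real Set Filter Topology MeasureTheory

lemma exp_image : Real.exp '' univ = Ioi 0 := by
  rw [image_univ, Real.range_exp]

lemma integrable_g1 {a : ℝ} (ha : 0 < a) :
    Integrable (fun x : ℝ => Real.exp (a * x - Real.exp x)) := by
  have h := Real.GammaIntegral_convergent ha
  rw [← exp_image, integrableOn_image_iff_integrableOn_abs_deriv_smul MeasurableSet.univ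
    (fun x _ => (Real.hasDerivAt_exp x).hasDerivWithinAt) Real.exp_injective.injOn,
    integrableOn_univ] at h
  refine h.congr (Eventually.of_forall fun x => ?_)
  simp only [smul_eq_mul, abs_of_pos (Real.exp_pos x)]
  rw [← Real.exp_mul, ← Real.exp_add, ← Real.exp_add]
  ring_nf

lemma integral_g1 {a : ℝ} (ha : 0 < a) :
    ∫ x : ℝ, Real.exp (a * x - Real.exp x) = Real.Gamma a := by
  rw [Real.Gamma_eq_integral ha, ← exp_image, integral_image_eq_integral_abs_deriv_smul
    MeasurableSet.univ
    (fun x _ => (Real.hasDerivAt_exp x).hasDerivWithinAt) Real.exp_injective.injOn,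
    setIntegral_univ]
  congr 1 with x
  simp only [smul_eq_mul, abs_of_pos (Real.exp_pos x)]
  rw [← Real.exp_mul, ← Real.exp_add, ← Real.exp_add]
  ring_nf

lemma integrable_g {a δ : ℝ} (ha : 0 < a) (hδ : 0 < δ) :
    Integrable (fun x : ℝ => Real.exp (a * x - δ * Real.exp x)) := by
  have h := ((integrable_g1 ha).comp_add_right (Real.log δ)).const_mul (Real.exp (- a * Real.log δ))
  refine h.congr (Eventually.of_forall fun x => ?_)
  simp only
  rw [← Real.exp_add, Real.exp_add x, Real.exp_log hδ]
  ring_nf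

lemma integrableOn_g (a A : ℝ) {δ : ℝ} (hδ : 0 < δ) :
    IntegrableOn (fun x : ℝ => Real.exp (a * x - δ * Real.exp x)) (Ioi A) := by
  have h := ((integrable_g (a := |a| + 1) (by positivity) hδ).integrableOn (s := Ioi A)).const_mul
    (Real.exp ((a - (|a| + 1)) * A))
  refine Integrable.mono' h (by fun_prop) ?_
  filter_upwards [ae_restrict_mem measurableSet_Ioi] with x hx
  rw [Real.norm_eq_abs, abs_of_pos (Real.exp_pos _), ← Real.exp_add]
  apply Real.exp_le_exp.2
  have : A < x := hx
  nlinarith [le_abs_self a]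

lemma g_atTop (a : ℝ) {δ : ℝ} (hδ : 0 < δ) :
    Tendsto (fun x : ℝ => Real.exp (a * x - δ * Real.exp x)) atTop (𝓝 0) := by
  have h := (tendsto_rpow_mul_exp_neg_mul_atTop_nhds_zero a δ hδ).comp Real.tendsto_exp_atTop
  refine h.congr fun x => ?_
  simp only [Function.comp]
  rw [← Real.exp_mul, ← Real.exp_add]
  ring_nf

lemma g_atBot {a δ : ℝ} (ha : 0 < a) (hδ : 0 < δ) :
    Tendsto (fun x : ℝ => Real.exp (a * x - δ * Real.exp x)) atBot (𝓝 0) := by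
  have h : Tendsto (fun x : ℝ => Real.exp (a * x)) atBot (𝓝 0) :=
    Real.tendsto_exp_atBot.comp (tendsto_id.const_mul_atBot ha)
  refine squeeze_zero (fun x => (Real.exp_pos _).le) (fun x => ?_) h
  apply Real.exp_le_exp.2
  have := mul_pos hδ (Real.exp_pos x)
  linarith

/-- horizontal line shift -/
lemma hshift {F : ℂ → ℂ} {y₁ y₂ : ℝ} {g : ℝ → ℝ} (hF : Differentiable ℂ F)
    (hg : ∀ x y : ℝ, y ∈ uIcc y₁ y₂ → ‖F (x + y * Complex.I)‖ ≤ g x)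
    (hgi : Integrable g) (hg1 : Tendsto g atTop (𝓝 0)) (hg2 : Tendsto g atBot (𝓝 0)) :
    ∫ x : ℝ, F (x + y₁ * Complex.I) = ∫ x : ℝ, F (x + y₂ * Complex.I) := by
  have hc := hF.continuous
  have hi : ∀ y ∈ uIcc y₁ y₂, Integrable (fun x : ℝ => F (x + y * Complex.I)) := fun y hy =>
    hgi.mono' (by fun_prop) (Eventually.of_forall fun x => hg x y hy)
  have ht : ∀ y ∈ uIcc y₁ y₂, Tendsto (fun T : ℝ => ∫ x in (-T)..T, F (x + y * Complex.I)) atTop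
      (𝓝 (∫ x : ℝ, F (x + y * Complex.I))) := fun y hy =>
    intervalIntegral_tendsto_integral (hi y hy) tendsto_neg_atTop_atBot tendsto_id
  have hv : ∀ s : ℝ → ℝ, Tendsto (fun T => g (s T)) atTop (𝓝 0) → Tendsto
      (fun T : ℝ => Complex.I • ∫ y in y₁..y₂, F ((s T : ℝ) + y * Complex.I)) atTop (𝓝 0) := by
    intro s hs
    rw [tendsto_zero_iff_norm_tendsto_zero]
    refine squeeze_zero (fun _ => norm_nonneg _) (fun T => ?_)
      (by simpa using hs.mul_const (|y₂ - y₁|))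
    rw [norm_smul, Complex.norm_I, one_mul]
    exact intervalIntegral.norm_integral_le_of_norm_le_const fun y hy =>
      hg _ y (uIoc_subset_uIcc hy)
  have h1 := ht y₁ left_mem_uIcc
  have h2 := ht y₂ right_mem_uIcc
  have h3 := hv (fun T => T) hg1
  have h4 := hv (fun T => -T) (hg2.comp tendsto_neg_atTop_atBot)
  have h5 := ((h1.sub h2).add h3).sub h4
  have h6 := h5.congr (f₂ := fun _ => 0) fun T => by
    have := Complex.integral_boundary_rect_eq_zero_of_differentiableOn F
      (((-T : ℝ) : ℂ) + y₁ * Complex.I) ((T : ℂ) + y₂ * Complex.I) hF.differentiableOn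
    simpa using this
  have h7 := tendsto_nhds_unique h6 tendsto_const_nhds
  simp only [add_zero, sub_zero] at h7
  exact sub_eq_zero.1 h7

/-- contour integral over a U-shaped contour -/
noncomputable def L (A θ : ℝ) (F : ℂ → ℂ) : ℂ :=
  (∫ x in Ioi A, F (x + θ * Complex.I)) - (∫ x in Ioi A, F (x + (-θ : ℝ) * Complex.I))
    + Complex.I * ∫ y in (-θ)..θ, F (A + y * Complex.I)

lemma L_shift {F : ℂ → ℂ} {A θ C a : ℝ} (hθ : 0 ≤ θ) (ha : 0 < a)
    (hF : ∀ ζ : ℂ, |ζ.im| ≤ θ → DifferentiableAt ℂ F ζ)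
    (hb : ∀ ζ : ℂ, |ζ.im| ≤ θ → ζ.re ≤ A → ‖F ζ‖ ≤ C * Real.exp (a * ζ.re))
    (hi1 : Integrable (fun x : ℝ => F (x + θ * Complex.I)))
    (hi2 : Integrable (fun x : ℝ => F (x + (-θ : ℝ) * Complex.I))) :
    L A θ F = (∫ x : ℝ, F (x + θ * Complex.I)) - ∫ x : ℝ, F (x + (-θ : ℝ) * Complex.I) := by
  have t1 := intervalIntegral_tendsto_integral_Iic A hi1.integrableOn tendsto_id
  have t2 := intervalIntegral_tendsto_integral_Iic A hi2.integrableOn tendsto_id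
  have t3 : Tendsto (fun B : ℝ => Complex.I • ∫ y in (-θ)..θ, F (B + y * Complex.I)) atBot
      (𝓝 0) := by
    rw [tendsto_zero_iff_norm_tendsto_zero]
    have h : Tendsto (fun x : ℝ => Real.exp (a * x)) atBot (𝓝 0) :=
      Real.tendsto_exp_atBot.comp (tendsto_id.const_mul_atBot ha)
    have h' := (h.const_mul C).mul_const (|θ - -θ|)
    simp only [mul_zero, zero_mul] at h'
    refine squeeze_zero' (Eventually.of_forall fun _ => norm_nonneg _) ?_ h'
    filter_upwards [Iic_mem_atBot A] with B hB
    rw [norm_smul, Complex.norm_I, one_mul]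
    refine intervalIntegral.norm_integral_le_of_norm_le_const fun y hy => ?_
    have hy' := uIoc_subset_uIcc hy
    rw [uIcc_of_le (by linarith)] at hy'
    have := hb (B + y * Complex.I) (by simpa using abs_le.2 hy') (by simpa using hB)
    simpa using this
  have t4 := ((t2.sub t1).add (tendsto_const_nhds
    (x := Complex.I • ∫ y in (-θ)..θ, F (A + y * Complex.I)))).sub t3
  have t5 := t4.congr (f₂ := fun _ => 0) fun B => by
    have := Complex.integral_boundary_rect_eq_zero_of_differentiableOn F
      ((B : ℂ) + (-θ : ℝ) * Complex.I) ((A : ℂ) + θ * Complex.I) (fun ζ hζ =>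
        (hF ζ (by
          have := hζ.2
          simp only [mem_preimage] at this
          rw [uIcc_of_le (by simp; linarith)] at this
          exact abs_le.2 (by simpa using this))).differentiableWithinAt)
    simpa using this
  have t6 := tendsto_nhds_unique t5 tendsto_const_nhds
  simp only [smul_eq_mul, sub_zero] at t6
  have e1 := intervalIntegral.integral_Iic_add_Ioi (b := A) hi1.integrableOn hi1.integrableOn
  have e2 := intervalIntegral.integral_Iic_add_Ioi (b := A) hi2.integrableOn hi2.integrableOn
  rw [← e1, ← e2, L]
  linear_combination t6


noncomputable def Fz (z : ℝ) (ζ : ℂ) : ℂ := Complex.exp (Complex.exp ζ + (1 - z) * ζ)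

lemma norm_Fz (z x y : ℝ) : ‖Fz z (x + y * Complex.I)‖ =
    Real.exp ((1 - z) * x + Real.exp x * Real.cos y) := by
  rw [Fz, Complex.norm_exp]
  congr 1
  simp [Complex.exp_re]
  ring

lemma norm_Fz_le {z x y δ : ℝ} (h : Real.cos y ≤ -δ) : ‖Fz z (x + y * Complex.I)‖ ≤
    Real.exp ((1 - z) * x - δ * Real.exp x) := by
  rw [norm_Fz]
  apply Real.exp_le_exp.2
  nlinarith [Real.exp_pos x]

lemma Fz_diff (z : ℝ) : Differentiable ℂ (Fz z) := by
  unfold Fz; fun_prop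

lemma Fz_cont (z : ℝ) : Continuous (Fz z) := (Fz_diff z).continuous

lemma Fz_pi {z : ℝ} (hz : z < 1) {y : ℝ} (hy : Complex.exp (y * Complex.I) = -1) :
    ∫ x : ℝ, Fz z (x + y * Complex.I) =
      Complex.exp ((1 - z) * (y * Complex.I)) * Complex.Gamma (1 - z) := by
  have h := integral_g1 (a := 1 - z) (by linarith)
  have : Complex.Gamma (1 - z) = ((Real.Gamma (1 - z) : ℝ) : ℂ) := by
    rw [← Complex.Gamma_ofReal]; simp
  rw [this, ← h, ← integral_complex_ofReal, ← integral_const_mul]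
  congr 1 with x
  rw [Fz, Complex.exp_add (x : ℂ), hy, Complex.ofReal_exp, ← Complex.exp_add]
  congr 1
  push_cast
  ring

lemma Fz_line {z : ℝ} (hz : z < 1) {θ : ℝ} (h1 : π / 2 < θ) (h2 : θ ≤ π) :
    (∫ x : ℝ, Fz z (x + θ * Complex.I)) - (∫ x : ℝ, Fz z (x + (-θ : ℝ) * Complex.I)) =
      2 * π * Complex.I / Complex.Gamma z := by
  have hcos : Real.cos θ < 0 := Real.cos_neg_of_pi_div_two_lt_of_lt h1 (by linarith [Real.pi_pos])
  have hδ : 0 < -Real.cos θ := by linarith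
  have ha : 0 < 1 - z := by linarith
  have hp := Real.pi_pos
  have e1 := hshift (y₁ := θ) (y₂ := π) (Fz_diff z) (fun x y hy => norm_Fz_le (δ := -Real.cos θ) (by
      rw [uIcc_of_le h2] at hy
      simpa using Real.cos_le_cos_of_nonneg_of_le_pi (by linarith) hy.2 hy.1))
    (integrable_g ha hδ) (g_atTop _ hδ) (g_atBot ha hδ)
  have e2 := hshift (y₁ := -θ) (y₂ := -π) (Fz_diff z)
    (fun x y hy => norm_Fz_le (δ := -Real.cos θ) (by
      rw [uIcc_of_ge (by linarith)] at hy
      rw [← Real.cos_neg y]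
      simpa using Real.cos_le_cos_of_nonneg_of_le_pi (by linarith) (y := -y)
        (by linarith [hy.1]) (by linarith [hy.2])))
    (integrable_g ha hδ) (g_atTop _ hδ) (g_atBot ha hδ)
  rw [e1, e2, Fz_pi hz Complex.exp_pi_mul_I, Fz_pi hz (by
    push_cast; rw [neg_mul, Complex.exp_neg, Complex.exp_pi_mul_I]; norm_num)]
  have hr := Complex.Gamma_mul_Gamma_one_sub (z : ℂ)
  have hg : Complex.Gamma (1 - z) ≠ 0 := by
    have : (1 - z : ℂ) = ((1 - z : ℝ) : ℂ) := by push_cast; rfl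
    rw [this, Complex.Gamma_ofReal]
    exact_mod_cast (Real.Gamma_pos_of_pos ha).ne'
  have hs : Complex.exp ((1 - z) * (π * Complex.I)) - Complex.exp ((1 - z) * ((-π : ℝ) * Complex.I))
      = 2 * Complex.I * Complex.sin (π * z) := by
    have : Complex.sin (π * z) = Complex.sin (π * (1 - z)) := by
      rw [mul_sub, mul_one, Complex.sin_pi_sub]
    rw [this, Complex.sin]
    push_cast
    rw [show -(π * (1 - z) : ℂ) * Complex.I = (1 - z) * (-π * Complex.I) by ring,
      show (π * (1 - z) : ℂ) * Complex.I = (1 - z) * (π * Complex.I) by ring]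
    ring_nf
    rw [Complex.I_sq]
    ring
  rw [← sub_mul, hs]
  by_cases hsin : Complex.sin (π * z) = 0
  · rw [hsin, div_zero] at hr
    have : Complex.Gamma z = 0 := by
      rcases mul_eq_zero.1 hr with h | h
      · exact h
      · exact absurd h hg
    rw [hsin, this]; simp
  · have hz0 : Complex.Gamma z ≠ 0 := by
      intro h
      rw [h, zero_mul] at hr
      have := div_ne_zero (by exact_mod_cast hp.ne' : (π : ℂ) ≠ 0) hsin
      exact this hr.symm
    rw [eq_div_iff hsin] at hr
    rw [eq_div_iff hz0]
    linear_combination (2 * Complex.I) * hr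

lemma Fz_intOn {z A y : ℝ} (hy : Real.cos y < 0) :
    IntegrableOn (fun x : ℝ => Fz z (x + y * Complex.I)) (Ioi A) := by
  have hc := Fz_cont z
  exact Integrable.mono' (integrableOn_g (1 - z) A (δ := -Real.cos y) (by linarith)) (by fun_prop)
    (Eventually.of_forall fun x => norm_Fz_le (by simp))

lemma Fz_int {z y : ℝ} (hz : z < 1) (hy : Real.cos y < 0) :
    Integrable (fun x : ℝ => Fz z (x + y * Complex.I)) := by
  have hc := Fz_cont z
  exact Integrable.mono' (integrable_g (a := 1 - z) (by linarith) (δ := -Real.cos y) (by linarith))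
    (by fun_prop) (Eventually.of_forall fun x => norm_Fz_le (by simp))

lemma L_Fz_lt_one {z : ℝ} (hz : z < 1) (A : ℝ) {θ : ℝ} (h1 : π / 2 < θ) (h2 : θ ≤ π) :
    L A θ (Fz z) = 2 * π * Complex.I / Complex.Gamma z := by
  have hcos : Real.cos θ < 0 := Real.cos_neg_of_pi_div_two_lt_of_lt h1 (by linarith [Real.pi_pos])
  rw [← Fz_line hz h1 h2]
  refine L_shift (C := Real.exp (Real.exp A)) (a := 1 - z) (by linarith [Real.pi_pos])
    (by linarith) (fun ζ _ => Fz_diff z ζ) (fun ζ _ hζ => ?_) (Fz_int hz hcos)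
    (Fz_int hz (by simpa using hcos))
  have := norm_Fz z ζ.re ζ.im
  rw [Complex.re_add_im] at this
  rw [this, ← Real.exp_add]
  apply Real.exp_le_exp.2
  have h3 := Real.exp_le_exp.2 hζ
  have h4 := Real.cos_le_one ζ.im
  nlinarith [Real.exp_pos ζ.re]

lemma L_Fz_rec (z A : ℝ) {θ : ℝ} (h1 : π / 2 < θ) (h2 : θ ≤ π) :
    L A θ (Fz z) = z * L A θ (Fz (z + 1)) := by
  have hcos : Real.cos θ < 0 := Real.cos_neg_of_pi_div_two_lt_of_lt h1 (by linarith [Real.pi_pos])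
  have hd : ∀ ζ, HasDerivAt (Fz (z + 1)) (Fz z ζ - z * Fz (z + 1) ζ) ζ := by
    intro ζ
    have h : HasDerivAt (fun ζ : ℂ => Complex.exp ζ + (1 - ((z + 1 : ℝ) : ℂ)) * ζ)
      (Complex.exp ζ + (1 - ((z + 1 : ℝ) : ℂ)) * 1) ζ :=
      (Complex.hasDerivAt_exp ζ).add ((hasDerivAt_id ζ).const_mul _)
    have h := h.cexp
    refine h.congr_deriv ?_
    have e : Fz z ζ = Fz (z + 1) ζ * Complex.exp ζ := by
      rw [Fz, Fz, ← Complex.exp_add]; congr 1; push_cast; ring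
    rw [e, Fz]; push_cast; ring
  have ray : ∀ y : ℝ, Real.cos y < 0 →
      (∫ x in Ioi A, Fz z (x + y * Complex.I)) - z * ∫ x in Ioi A, Fz (z + 1) (x + y * Complex.I)
      = - Fz (z + 1) (A + y * Complex.I) := by
    intro y hy
    rw [← integral_const_mul, ← integral_sub (Fz_intOn hy) ((Fz_intOn hy).const_mul _)]
    rw [integral_Ioi_of_hasDerivAt_of_tendsto' (f := fun x : ℝ => Fz (z + 1) (x + y * Complex.I))
      (m := 0) ?_ ?_ ?_]
    · simp
    · intro x _
      have h := (hd (x + y * Complex.I)).comp (x : ℂ) ((hasDerivAt_id (x : ℂ)).add_const (y * Complex.I))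
      have := h.comp_ofReal
      simpa using this
    · exact (Fz_intOn hy).sub ((Fz_intOn hy).const_mul _)
    · rw [tendsto_zero_iff_norm_tendsto_zero]
      exact squeeze_zero (fun _ => norm_nonneg _) (fun x => norm_Fz_le (δ := -Real.cos y) (by simp))
        (g_atTop _ (by linarith))
  have arc : Complex.I * (∫ y in (-θ)..θ, Fz z (A + y * Complex.I)) -
      z * (Complex.I * ∫ y in (-θ)..θ, Fz (z + 1) (A + y * Complex.I))
      = Fz (z + 1) (A + θ * Complex.I) - Fz (z + 1) (A + (-θ : ℝ) * Complex.I) := by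
    have c1 := Fz_cont z
    have c2 := Fz_cont (z + 1)
    have i1 : ∀ w, IntervalIntegrable (fun y : ℝ => Fz w (A + y * Complex.I)) volume (-θ) θ :=
      fun w => by have := Fz_cont w; exact Continuous.intervalIntegrable (by fun_prop) _ _
    have : ∀ y ∈ uIcc (-θ) θ, HasDerivAt (fun y : ℝ => Fz (z + 1) (A + y * Complex.I))
        (Complex.I * Fz z (A + y * Complex.I) - z * (Complex.I * Fz (z + 1) (A + y * Complex.I))) y := by
      intro y _
      have h := (hd (A + y * Complex.I)).comp (y : ℂ)
        (((hasDerivAt_id (y : ℂ)).mul_const Complex.I).const_add (A : ℂ))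
      have := h.comp_ofReal
      refine this.congr_deriv ?_
      simp only [one_mul]
      ring
    have h := intervalIntegral.integral_eq_sub_of_hasDerivAt this
      (((i1 z).const_mul _).sub (((i1 (z + 1)).const_mul _).const_mul _))
    rw [← h, intervalIntegral.integral_sub ((i1 z).const_mul _)
      (((i1 (z + 1)).const_mul _).const_mul _)]
    simp only [intervalIntegral.integral_const_mul]
  have r1 := ray θ hcos
  have r2 := ray (-θ) (by simpa using hcos)
  rw [L, L]
  linear_combination r1 - r2 + arc

lemma L_Fz_cont (z₀ A : ℝ) {θ : ℝ} (h1 : π / 2 < θ) (h2 : θ ≤ π) :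
    ContinuousAt (fun z => L A θ (Fz z)) z₀ := by
  have hcos : Real.cos θ < 0 := Real.cos_neg_of_pi_div_two_lt_of_lt h1 (by linarith [Real.pi_pos])
  have hnb : ∀ᶠ z in 𝓝 z₀, z ∈ Icc (z₀ - 1) (z₀ + 1) :=
    Icc_mem_nhds (by linarith) (by linarith)
  have hcz : ∀ ζ : ℂ, Continuous (fun z => Fz z ζ) := fun ζ => by unfold Fz; fun_prop
  have hbd : ∀ z ∈ Icc (z₀ - 1) (z₀ + 1), ∀ x c : ℝ, Real.exp ((1 - z) * x + c) ≤
      Real.exp ((1 - (z₀ - 1)) * x + c) + Real.exp ((1 - (z₀ + 1)) * x + c) := by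
    intro z hz x c
    rcases le_total 0 x with hx | hx
    · have : Real.exp ((1 - z) * x + c) ≤ Real.exp ((1 - (z₀ - 1)) * x + c) :=
        Real.exp_le_exp.2 (by nlinarith [hz.1])
      linarith [Real.exp_pos ((1 - (z₀ + 1)) * x + c)]
    · have : Real.exp ((1 - z) * x + c) ≤ Real.exp ((1 - (z₀ + 1)) * x + c) :=
        Real.exp_le_exp.2 (by nlinarith [hz.2])
      linarith [Real.exp_pos ((1 - (z₀ - 1)) * x + c)]
  have ray : ∀ y : ℝ, Real.cos y < 0 →
      ContinuousAt (fun z => ∫ x in Ioi A, Fz z (x + y * Complex.I)) z₀ := by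
    intro y hy
    refine continuousAt_of_dominated (bound := fun x =>
      ‖Fz (z₀ - 1) (x + y * Complex.I)‖ + ‖Fz (z₀ + 1) (x + y * Complex.I)‖)
      (Eventually.of_forall fun z => ?_) ?_ ((Fz_intOn hy).norm.add (Fz_intOn hy).norm)
      (Eventually.of_forall fun x => (hcz _).continuousAt)
    · have := Fz_cont z; fun_prop
    · filter_upwards [hnb] with z hz
      refine Eventually.of_forall fun x => ?_
      simp only [norm_Fz]
      exact hbd z hz _ _
  have arc : ContinuousAt (fun z => ∫ y in (-θ)..θ, Fz z (A + y * Complex.I)) z₀ := by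
    refine intervalIntegral.continuousAt_of_dominated_interval (bound := fun y =>
      ‖Fz (z₀ - 1) (A + y * Complex.I)‖ + ‖Fz (z₀ + 1) (A + y * Complex.I)‖)
      (Eventually.of_forall fun z => ?_) ?_ ?_
      (Eventually.of_forall fun x _ => (hcz _).continuousAt)
    · have := Fz_cont z; fun_prop
    · filter_upwards [hnb] with z hz
      refine Eventually.of_forall fun x _ => ?_
      simp only [norm_Fz]
      exact hbd z hz _ _
    · have := Fz_cont (z₀ - 1)
      have := Fz_cont (z₀ + 1)
      exact Continuous.intervalIntegrable (by fun_prop) _ _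
  unfold L
  exact ((ray θ hcos).sub (ray (-θ) (by simpa using hcos))).add (continuousAt_const.mul arc)

lemma L_Fz_one (A : ℝ) {θ : ℝ} (h1 : π / 2 < θ) (h2 : θ ≤ π) :
    L A θ (Fz 1) = 2 * π * Complex.I / Complex.Gamma 1 := by
  have c1 : Tendsto (fun z => L A θ (Fz z)) (𝓝[<] 1) (𝓝 (L A θ (Fz 1))) :=
    (L_Fz_cont 1 A h1 h2).tendsto.mono_left nhdsWithin_le_nhds
  have c2 : Continuous (fun z : ℝ => 2 * π * Complex.I * (Complex.Gamma z)⁻¹) := by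
    have := Complex.differentiable_one_div_Gamma.continuous
    exact continuous_const.mul (this.comp Complex.continuous_ofReal)
  have c3 : Tendsto (fun z : ℝ => 2 * π * Complex.I * (Complex.Gamma z)⁻¹) (𝓝[<] 1)
      (𝓝 (2 * π * Complex.I * (Complex.Gamma ((1 : ℝ) : ℂ))⁻¹)) :=
    (c2.tendsto 1).mono_left nhdsWithin_le_nhds
  have c4 := c1.congr' (by
    filter_upwards [self_mem_nhdsWithin] with z hz
    rw [L_Fz_lt_one hz A h1 h2, div_eq_mul_inv])
  have := tendsto_nhds_unique c4 c3
  rw [this]; simp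

lemma L_Fz_aux (A : ℝ) {θ : ℝ} (h1 : π / 2 < θ) (h2 : θ ≤ π) (n : ℕ) :
    ∀ z : ℝ, z < n + 1 → L A θ (Fz z) = 2 * π * Complex.I / Complex.Gamma z := by
  induction n with
  | zero => intro z hz; exact L_Fz_lt_one (by simpa using hz) A h1 h2
  | succ n ih =>
    intro z hz
    by_cases hz1 : z = 1
    · subst hz1; simpa using L_Fz_one A h1 h2
    have hne : ((z - 1 : ℝ) : ℂ) ≠ 0 := by
      exact_mod_cast sub_ne_zero.2 hz1
    have e := L_Fz_rec (z - 1) A h1 h2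
    rw [ih (z - 1) (by push_cast at hz; linarith), sub_add_cancel] at e
    have g := Complex.Gamma_add_one _ hne
    rw [show ((z - 1 : ℝ) : ℂ) + 1 = z by push_cast; ring] at g
    rw [g]
    apply mul_left_cancel₀ hne
    rw [← e]
    field_simp

lemma L_Fz (A : ℝ) {θ : ℝ} (h1 : π / 2 < θ) (h2 : θ ≤ π) (z : ℝ) :
    L A θ (Fz z) = 2 * π * Complex.I / Complex.Gamma z := by
  obtain ⟨n, hn⟩ := exists_nat_gt z
  exact L_Fz_aux A h1 h2 n z (by linarith)

noncomputable def G (ρ : ℝ) (μ : ℂ) (ζ : ℂ) : ℂ :=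
  Complex.exp (Complex.exp ζ + ρ * ζ) / (Complex.exp (ρ * ζ) - μ)

lemma term_eq (ρ : ℝ) (μ ζ : ℂ) (k : ℕ) :
    μ ^ k * Fz (ρ * k + 1) ζ = (μ * Complex.exp (-(ρ * ζ))) ^ k * Fz 1 ζ := by
  rw [mul_pow, ← Complex.exp_nat_mul, Fz, Fz, mul_assoc, ← Complex.exp_add]
  congr 2
  push_cast; ring

lemma small_of {ρ A : ℝ} {μ ζ : ℂ} (hρ : 0 < ρ) (hA : ‖μ‖ * Real.exp (-(ρ * A)) ≤ 1 / 2)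
    (hζ : A ≤ ζ.re) : ‖μ * Complex.exp (-(ρ * ζ))‖ ≤ 1 / 2 := by
  rw [norm_mul, Complex.norm_exp]
  refine le_trans (mul_le_mul_of_nonneg_left (Real.exp_le_exp.2 ?_) (norm_nonneg _)) hA
  simp
  exact mul_le_mul_of_nonneg_left hζ hρ.le

lemma term_bound {ρ A : ℝ} {μ ζ : ℂ} (hρ : 0 < ρ) (hA : ‖μ‖ * Real.exp (-(ρ * A)) ≤ 1 / 2)
    (hζ : A ≤ ζ.re) (k : ℕ) : ‖μ ^ k * Fz (ρ * k + 1) ζ‖ ≤ (1 / 2) ^ k * ‖Fz 1 ζ‖ := by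
  rw [term_eq, norm_mul, norm_pow]
  exact mul_le_mul_of_nonneg_right
    (pow_le_pow_left₀ (norm_nonneg _) (small_of hρ hA hζ) _) (norm_nonneg _)

lemma term_hasSum {ρ A : ℝ} {μ ζ : ℂ} (hρ : 0 < ρ) (hA : ‖μ‖ * Real.exp (-(ρ * A)) ≤ 1 / 2)
    (hζ : A ≤ ζ.re) : HasSum (fun k : ℕ => μ ^ k * Fz (ρ * k + 1) ζ) (G ρ μ ζ) := by
  simp only [term_eq]
  have hs := small_of hρ hA hζ
  have h := (hasSum_geometric_of_norm_lt_one (lt_of_le_of_lt hs (by norm_num))).mul_right (Fz 1 ζ)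
  convert! h using 1
  have hne : 1 - μ * Complex.exp (-(ρ * ζ)) ≠ 0 := by
    intro h0
    have : μ * Complex.exp (-(ρ * ζ)) = 1 := (sub_eq_zero.1 h0).symm
    rw [this] at hs
    norm_num at hs
  have e : Complex.exp (ρ * ζ) - μ = Complex.exp (ρ * ζ) * (1 - μ * Complex.exp (-(ρ * ζ))) := by
    rw [mul_sub, mul_left_comm, ← Complex.exp_add]; simp

  rw [G, e, Fz, Complex.exp_add]
  have := Complex.exp_ne_zero (ρ * ζ)
  simp
  field_simp

lemma L_hasSum {ρ A θ : ℝ} {μ : ℂ} (hρ : 0 < ρ) (hA : ‖μ‖ * Real.exp (-(ρ * A)) ≤ 1 / 2)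
    (h1 : π / 2 < θ) (h2 : θ ≤ π) :
    HasSum (fun k : ℕ => μ ^ k * L A θ (Fz (ρ * k + 1))) (L A θ (G ρ μ)) := by
  have hcos : Real.cos θ < 0 := Real.cos_neg_of_pi_div_two_lt_of_lt h1 (by linarith [Real.pi_pos])
  have hsum : Summable (fun k : ℕ => (1 / 2 : ℝ) ^ k) := summable_geometric_two
  have hm : ∀ (k : ℕ), Continuous (fun ζ => μ ^ k * Fz (ρ * k + 1) ζ) := fun k => by
    have := Fz_cont (ρ * k + 1); fun_prop
  have ray : ∀ y : ℝ, Real.cos y < 0 → HasSum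
      (fun k : ℕ => ∫ x in Ioi A, μ ^ k * Fz (ρ * k + 1) (x + y * Complex.I))
      (∫ x in Ioi A, G ρ μ (x + y * Complex.I)) := by
    intro y hy
    refine hasSum_integral_of_dominated_convergence
      (fun k x => (1 / 2) ^ k * ‖Fz 1 (x + y * Complex.I)‖) (fun k => ?_) (fun k => ?_)
      (Eventually.of_forall fun x => hsum.mul_right _) ?_ ?_
    · have := hm k
      exact (this.comp (by fun_prop : Continuous fun x : ℝ => (x : ℂ) + y * Complex.I)).aestronglyMeasurable
    · filter_upwards [ae_restrict_mem measurableSet_Ioi] with x hx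
      exact term_bound hρ hA (by simpa using le_of_lt hx) k
    · simp only [tsum_mul_right]
      exact (Fz_intOn hy).norm.const_mul _
    · filter_upwards [ae_restrict_mem measurableSet_Ioi] with x hx
      exact term_hasSum hρ hA (by simpa using le_of_lt hx)
  have arc : HasSum
      (fun k : ℕ => ∫ y in (-θ)..θ, μ ^ k * Fz (ρ * k + 1) (A + y * Complex.I))
      (∫ y in (-θ)..θ, G ρ μ (A + y * Complex.I)) := by
    refine intervalIntegral.hasSum_integral_of_dominated_convergence
      (fun k y => (1 / 2) ^ k * ‖Fz 1 (A + y * Complex.I)‖) (fun k => ?_)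
      (fun k => Eventually.of_forall fun y _ => term_bound hρ hA (by simp) k)
      (Eventually.of_forall fun x _ => hsum.mul_right _) ?_
      (Eventually.of_forall fun y _ => term_hasSum hρ hA (by simp))
    · have := hm k
      exact (this.comp (by fun_prop : Continuous fun y : ℝ => (A : ℂ) + y * Complex.I)).aestronglyMeasurable
    · simp only [tsum_mul_right]
      have := Fz_cont 1
      exact Continuous.intervalIntegrable (by fun_prop) _ _
  have := ((ray θ hcos).sub (ray (-θ) (by simpa using hcos))).add (arc.mul_left Complex.I)
  unfold L
  convert! this using 2 with k

  simp only [integral_const_mul, intervalIntegral.integral_const_mul]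
  ring

lemma ML_rep {ρ θ c : ℝ} {μ : ℂ} (hρ : 0 < ρ) (h1 : π / 2 < θ) (h2 : θ ≤ π) (hc : 0 < c)
    (hμ : ∀ ζ : ℂ, |ζ.im| ≤ θ → c ≤ ‖Complex.exp (ρ * ζ) - μ‖) :
    2 * π * Complex.I * mittagLeffler ρ μ =
      (∫ x : ℝ, G ρ μ (x + θ * Complex.I)) - ∫ x : ℝ, G ρ μ (x + (-θ : ℝ) * Complex.I) := by
  have hcos : Real.cos θ < 0 := Real.cos_neg_of_pi_div_two_lt_of_lt h1 (by linarith [Real.pi_pos])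
  have hp := Real.pi_pos
  obtain ⟨A, hA⟩ : ∃ A : ℝ, ‖μ‖ * Real.exp (-(ρ * A)) ≤ 1 / 2 := by
    have h : Tendsto (fun A : ℝ => ‖μ‖ * Real.exp (-(ρ * A))) atTop (𝓝 (‖μ‖ * 0)) :=
      (Real.tendsto_exp_neg_atTop_nhds_zero.comp (tendsto_id.const_mul_atTop hρ)).const_mul _
    rw [mul_zero] at h
    exact (h.eventually (ge_mem_nhds (by norm_num : (0 : ℝ) < 1 / 2))).exists
  have hs := L_hasSum hρ hA h1 h2
  have hGd : ∀ ζ : ℂ, |ζ.im| ≤ θ → DifferentiableAt ℂ (G ρ μ) ζ := by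
    intro ζ hζ
    have : Complex.exp (ρ * ζ) - μ ≠ 0 := by
      intro h; have := hμ ζ hζ; rw [h, norm_zero] at this; linarith
    unfold G
    exact DifferentiableAt.div (by fun_prop) (by fun_prop) this
  have hGn : ∀ ζ : ℂ, |ζ.im| ≤ θ → ‖G ρ μ ζ‖ ≤ c⁻¹ * ‖Fz (1 - ρ) ζ‖ := by
    intro ζ hζ
    have e : Fz (1 - ρ) ζ = Complex.exp (Complex.exp ζ + ρ * ζ) := by
      rw [Fz]; congr 1; push_cast; ring
    rw [G, e, norm_div, div_eq_inv_mul]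
    exact mul_le_mul_of_nonneg_right (inv_anti₀ hc (hμ ζ hζ)) (norm_nonneg _)
  have hGi : ∀ y : ℝ, |y| ≤ θ → Real.cos y < 0 → Integrable (fun x : ℝ => G ρ μ (x + y * Complex.I)) := by
    intro y hy hy'
    refine ((Fz_int (z := 1 - ρ) (by linarith) hy').norm.const_mul c⁻¹).mono' ?_
      (Eventually.of_forall fun x => hGn _ (by simpa using hy))
    refine Continuous.aestronglyMeasurable (continuous_iff_continuousAt.2 fun x => ?_)
    exact ContinuousAt.comp (g := G ρ μ) (f := fun x : ℝ => (x : ℂ) + y * Complex.I)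
      (hGd _ (by simpa using hy)).continuousAt (by fun_prop)
  have hθ : 0 ≤ θ := by linarith
  rw [← L_shift (A := A) (C := c⁻¹ * Real.exp (Real.exp A)) hθ hρ hGd ?_
    (hGi θ (by rw [abs_of_nonneg hθ]) hcos)
    (hGi (-θ) (by rw [abs_neg, abs_of_nonneg hθ]) (by simpa using hcos)), ← hs.tsum_eq,
    mittagLeffler, ← tsum_mul_left]
  · congr 1 with k
    rw [L_Fz A h1 h2]
    push_cast
    ring
  · intro ζ hζ hζA
    refine (hGn ζ hζ).trans ?_
    have := norm_Fz (1 - ρ) ζ.re ζ.im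
    rw [Complex.re_add_im] at this
    rw [this, mul_assoc, ← Real.exp_add]
    refine mul_le_mul_of_nonneg_left (Real.exp_le_exp.2 ?_) (inv_pos.2 hc).le
    have h3 := Real.exp_le_exp.2 hζA
    have h4 := Real.cos_le_one ζ.im
    nlinarith [Real.exp_pos ζ.re]

lemma gamma_diff {x y β : ℝ} (hx : 0 ≤ x) (hxy : x < y) (hy : y < 1) (hβ : β ≤ 1 - x) :
    β * (y - x) ≤ (Real.Gamma y)⁻¹ - (Real.Gamma x)⁻¹ := by
  have hy0 : 0 < y := by linarith
  have hconv := Real.convexOn_log_Gamma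
  have hp : 0 < Real.Gamma (y + 1) := Real.Gamma_pos_of_pos (by linarith)
  have hq : 0 < Real.Gamma (x + 1) := Real.Gamma_pos_of_pos (by linarith)
  have g2 : Real.Gamma 2 = 1 := Real.Gamma_two
  have g3 : Real.Gamma 3 = 2 := by
    rw [show (3 : ℝ) = 2 + 1 by norm_num, Real.Gamma_add_one (by norm_num), g2, mul_one]
  have s1 := hconv.slope_mono_adjacent (x := x + 1) (y := y + 1) (z := 2)
    (mem_Ioi.2 (by linarith)) (mem_Ioi.2 (by norm_num)) (by linarith) (by linarith)
  have s2 := hconv.slope_mono_adjacent (x := y + 1) (y := 2) (z := 3)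
    (mem_Ioi.2 (by linarith)) (mem_Ioi.2 (by norm_num)) (by linarith) (by norm_num)
  have s3 := hconv.2 (mem_Ioi.2 one_pos : (1 : ℝ) ∈ Ioi 0)
    (mem_Ioi.2 two_pos : (2 : ℝ) ∈ Ioi 0) (by linarith : (0 : ℝ) ≤ 1 - y) hy0.le (by ring)
  simp only [Function.comp, smul_eq_mul, g2, g3, Real.Gamma_one, Real.log_one] at s1 s2 s3
  have hp1 : Real.Gamma (y + 1) ≤ 1 := by
    have : Real.log (Real.Gamma (y + 1)) ≤ 0 := by
      have e : (1 - y) * 1 + y * 2 = y + 1 := by ring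
      rw [e] at s3; linarith
    exact (Real.log_nonpos_iff hp.le).1 this
  have hpq : Real.Gamma (y + 1) ≤ Real.Gamma (x + 1) * (1 + (y - x)) := by
    have h1 := s1.trans s2
    rw [div_le_iff₀ (by linarith)] at h1
    have h2 : Real.log (Real.Gamma (y + 1)) ≤
        Real.log (Real.Gamma (x + 1)) + Real.log 2 * (y - x) := by
      have : (Real.log 2 - 0) / (3 - 2) * (y + 1 - (x + 1)) = Real.log 2 * (y - x) := by ring
      linarith
    have h3 := Real.exp_le_exp.2 h2
    rw [Real.exp_add, Real.exp_log hp, Real.exp_log hq, ← Real.rpow_def_of_pos two_pos] at h3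
    refine h3.trans (mul_le_mul_of_nonneg_left ?_ hq.le)
    have := _root_.rpow_one_add_le_one_add_mul_self (s := 1) (by norm_num) (p := y - x)
      (by linarith) (by linarith)
    norm_num at this
    linarith
  have ey : (Real.Gamma y)⁻¹ = y / Real.Gamma (y + 1) := by
    rw [Real.Gamma_add_one hy0.ne']
    have := (Real.Gamma_pos_of_pos hy0).ne'
    field_simp
  have ex : (Real.Gamma x)⁻¹ = x / Real.Gamma (x + 1) := by
    rcases hx.eq_or_lt with h | h
    · subst h; simp [Real.Gamma_zero]
    rw [Real.Gamma_add_one h.ne']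
    have := (Real.Gamma_pos_of_pos h).ne'
    field_simp
  rw [ey, ex]
  have h4 : x / Real.Gamma (x + 1) ≤ x * (1 + (y - x)) / Real.Gamma (y + 1) := by
    rw [div_le_div_iff₀ hq hp]
    nlinarith
  have h5 : y - x * (1 + (y - x)) ≤ (y - x * (1 + (y - x))) / Real.Gamma (y + 1) := by
    rw [le_div_iff₀ hp]
    have : 0 ≤ y - x * (1 + (y - x)) := by nlinarith
    nlinarith
  rw [sub_div] at h5
  nlinarith

lemma lower_bound {lam : ℂ} (hl : lam.re < 0) : ∃ θ c : ℝ, π / 2 < θ ∧ θ ≤ π ∧ 0 < c ∧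
    ∀ ρ : ℝ, 0 < ρ → ρ ≤ 1 → ∀ ζ : ℂ, |ζ.im| ≤ θ → c ≤ ‖Complex.exp (ρ * ζ) - lam‖ := by
  have hn : 0 < ‖lam‖ := norm_pos_iff.2 (by rintro rfl; simp at hl)
  have hre : -lam.re ≤ ‖lam‖ := (neg_le_abs _).trans (Complex.abs_re_le_norm lam)
  set κ := -lam.re / ‖lam‖ with hκ
  have hκ0 : 0 < κ := div_pos (by linarith) hn
  have hκ1 : κ ≤ 1 := (div_le_one hn).2 hre
  have hκm : κ * ‖lam‖ = -lam.re := by rw [hκ]; field_simp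
  have hcos : Real.cos (Real.arccos (-(κ / 4))) = -(κ / 4) :=
    Real.cos_arccos (by linarith) (by linarith)
  refine ⟨Real.arccos (-(κ / 4)), κ * ‖lam‖ / 2, ?_, Real.arccos_le_pi _, by positivity, ?_⟩
  · by_contra h
    push Not at h
    have := Real.cos_nonneg_of_mem_Icc
      ⟨by linarith [Real.arccos_nonneg (-(κ / 4)), Real.pi_pos], h⟩
    linarith
  · intro ρ h0 h1 ζ hζ
    set θ := Real.arccos (-(κ / 4))
    have hwre : (Complex.exp (ρ * ζ)).re = ‖Complex.exp (ρ * ζ)‖ * Real.cos (ρ * ζ.im) := by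
      rw [Complex.norm_exp, Complex.exp_re]; simp
    have hc : -(κ / 4) ≤ Real.cos (ρ * ζ.im) := by
      rw [← hcos, ← Real.cos_abs (ρ * ζ.im)]
      apply Real.cos_le_cos_of_nonneg_of_le_pi (abs_nonneg _) (Real.arccos_le_pi _)
      rw [abs_mul, abs_of_pos h0]
      nlinarith [abs_nonneg ζ.im]
    set w := Complex.exp (ρ * ζ)
    have b1 : w.re - lam.re ≤ ‖w - lam‖ := by
      have := (le_abs_self _).trans (Complex.abs_re_le_norm (w - lam))
      simpa using this
    have b2 : ‖w‖ - ‖lam‖ ≤ ‖w - lam‖ := norm_sub_norm_le _ _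
    rcases le_total ‖w‖ (2 * ‖lam‖) with h | h
    · have := mul_le_mul_of_nonneg_left hc (norm_nonneg w)
      nlinarith
    · nlinarith

noncomputable def ψ (lam η : ℂ) : ℂ := Complex.exp (2 * η) / (Complex.exp η - lam)

lemma G_eq {ρ τ : ℝ} {lam ζ : ℂ} (h : Complex.exp (ρ * (ζ - τ)) - lam ≠ 0) :
    -lam * G ρ (lam * (Real.exp (ρ * τ) : ℝ)) ζ =
      (Real.exp (-(ρ * τ)) : ℝ) * Fz (1 - ρ) ζ
        - Complex.exp (Complex.exp ζ) * ψ lam (ρ * (ζ - τ)) := by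
  have e1 : Complex.exp (ρ * ζ) = Complex.exp (ρ * (ζ - τ)) * Complex.exp (ρ * τ) := by
    rw [← Complex.exp_add]; congr 1; ring
  have e2 : Fz (1 - ρ) ζ = Complex.exp (Complex.exp ζ) * Complex.exp (ρ * ζ) := by
    rw [Fz, ← Complex.exp_add]; congr 1; push_cast; ring
  have e3 : Complex.exp (2 * (ρ * (ζ - τ))) = Complex.exp (ρ * (ζ - τ)) ^ 2 := by
    rw [← Complex.exp_nat_mul]; simp
  have h0 := Complex.exp_ne_zero (ρ * τ)
  rw [G, e2, ψ, e3, Complex.exp_add, e1]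
  push_cast
  rw [Complex.exp_neg]
  generalize Complex.exp (ρ * (ζ - τ)) = w at *
  generalize Complex.exp (ρ * τ : ℂ) = s at *
  have : w * s - lam * s ≠ 0 := by rw [← sub_mul]; exact mul_ne_zero h h0
  field_simp
  ring

lemma B_int {β δ : ℝ} (hβ : 0 < β) (hβ1 : β < 1) (hδ : 0 < δ) :
    Integrable (fun x : ℝ => (|x| + π + 1) * (Real.exp (2 * β * x) + Real.exp (3 * x)) *
      Real.exp (-(δ * Real.exp x))) := by
  have hp := Real.pi_pos
  have I : ∀ a : ℝ, 0 < a → Integrable (fun x : ℝ => Real.exp (a * x - δ * Real.exp x)) :=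
    fun a ha => integrable_g ha hδ
  have hI := ((((I (3 * β) (by linarith)).add (I β hβ)).add
    ((I (3 + β) (by linarith)).add (I (3 - β) (by linarith)))).const_mul β⁻¹).add
    (((I (2 * β) (by linarith)).add (I 3 (by norm_num))).const_mul (π + 1))
  refine hI.mono' (by fun_prop) (Eventually.of_forall fun x => ?_)
  rw [Real.norm_eq_abs, abs_of_nonneg (by positivity)]
  simp only [Pi.add_apply]
  have hx : |x| ≤ β⁻¹ * (Real.exp (β * x) + Real.exp (-(β * x))) := by
    rw [← div_eq_inv_mul, le_div_iff₀ hβ]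
    have h1 := Real.add_one_le_exp (β * x)
    have h2 := Real.add_one_le_exp (-(β * x))
    have h3 := Real.exp_pos (β * x)
    have h4 := Real.exp_pos (-(β * x))
    rcases abs_cases x with ⟨h, _⟩ | ⟨h, _⟩ <;> rw [h] <;> nlinarith
  have e : ∀ a : ℝ, Real.exp (a * x - δ * Real.exp x) =
      Real.exp (a * x) * Real.exp (-(δ * Real.exp x)) := fun a => by
    rw [← Real.exp_add, sub_eq_add_neg]
  have f1 : Real.exp (3 * β * x) = Real.exp (2 * β * x) * Real.exp (β * x) := by
    rw [← Real.exp_add]; ring_nf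
  have f2 : Real.exp (β * x) = Real.exp (2 * β * x) * Real.exp (-(β * x)) := by
    rw [← Real.exp_add]; ring_nf
  have f3 : Real.exp ((3 + β) * x) = Real.exp (3 * x) * Real.exp (β * x) := by
    rw [← Real.exp_add]; ring_nf
  have f4 : Real.exp ((3 - β) * x) = Real.exp (3 * x) * Real.exp (-(β * x)) := by
    rw [← Real.exp_add]; ring_nf
  rw [e, e, e, e, e, e]
  have key : (|x| + π + 1) * (Real.exp (2 * β * x) + Real.exp (3 * x)) ≤
      (β⁻¹ * (Real.exp (β * x) + Real.exp (-(β * x))) + π + 1) *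
        (Real.exp (2 * β * x) + Real.exp (3 * x)) := by gcongr
  refine (mul_le_mul_of_nonneg_right key (Real.exp_pos _).le).trans (le_of_eq ?_)
  rw [f1, f3, f4]
  linear_combination (-β⁻¹ * Real.exp (-(δ * Real.exp x))) * f2

lemma ψ_lip {lam : ℂ} {c θ β : ℝ} (hc : 0 < c) (hθ : θ ≤ π) (hβ : 0 < β)
    (hb : ∀ ρ : ℝ, 0 < ρ → ρ ≤ 1 → ∀ ζ : ℂ, |ζ.im| ≤ θ → c ≤ ‖Complex.exp (ρ * ζ) - lam‖)
    {ρ σ τ : ℝ} (h1 : β ≤ ρ) (h2 : ρ ≤ σ) (h3 : σ ≤ 1) (hτ : 0 ≤ τ) {x y : ℝ} (hy : |y| ≤ θ) :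
    ‖ψ lam (σ * (x + y * Complex.I - τ)) - ψ lam (ρ * (x + y * Complex.I - τ))‖ ≤
      (1 + τ) * Real.exp (-(2 * ρ * τ)) * (2 * c⁻¹ + (c⁻¹) ^ 2) *
        ((|x| + π + 1) * (Real.exp (2 * β * x) + Real.exp (3 * x))) * (σ - ρ) := by
  set ζ : ℂ := x + y * Complex.I - τ with hζ
  have him : |ζ.im| ≤ θ := by simpa [hζ] using hy
  have hre : ζ.re = x - τ := by simp [hζ]
  have hder : ∀ r ∈ Icc ρ σ, HasDerivWithinAt (fun r : ℝ => ψ lam (r * ζ))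
      ((2 * ζ * Complex.exp (2 * (r * ζ)) * (Complex.exp (r * ζ) - lam) -
        Complex.exp (2 * (r * ζ)) * (ζ * Complex.exp (r * ζ))) / (Complex.exp (r * ζ) - lam) ^ 2)
      (Icc ρ σ) r := by
    intro r hr
    have hne : Complex.exp (r * ζ) - lam ≠ 0 := by
      intro h
      have := hb r (by linarith [hr.1]) (hr.2.trans h3) ζ him
      rw [h, norm_zero] at this; linarith
    have d0 : HasDerivAt (fun r : ℂ => r * ζ) ζ (r : ℂ) := by
      simpa using (hasDerivAt_id (r : ℂ)).mul_const ζ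
    have d1 := (d0.const_mul 2).cexp
    have d2 := d0.cexp.sub_const lam
    have d3 := (d1.div d2 hne).comp_ofReal
    refine (d3.congr_deriv ?_).hasDerivWithinAt
    ring
  have hbound : ∀ r ∈ Ico ρ σ,
      ‖((2 * ζ * Complex.exp (2 * (r * ζ)) * (Complex.exp (r * ζ) - lam) -
        Complex.exp (2 * (r * ζ)) * (ζ * Complex.exp (r * ζ))) / (Complex.exp (r * ζ) - lam) ^ 2)‖
      ≤ (1 + τ) * Real.exp (-(2 * ρ * τ)) * (2 * c⁻¹ + (c⁻¹) ^ 2) *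
        ((|x| + π + 1) * (Real.exp (2 * β * x) + Real.exp (3 * x))) := by
    intro r hr
    have hr0 : 0 < r := by linarith [hr.1]
    have hr1 : r ≤ 1 := by linarith [hr.2]
    have hlow := hb r hr0 hr1 ζ him
    have hne : Complex.exp (r * ζ) - lam ≠ 0 := by
      intro h
      rw [h, norm_zero] at hlow; linarith
    have hinv : ‖(Complex.exp (r * ζ) - lam)⁻¹‖ ≤ c⁻¹ := by
      rw [norm_inv]; exact inv_anti₀ hc hlow
    have eq : ((2 * ζ * Complex.exp (2 * (r * ζ)) * (Complex.exp (r * ζ) - lam) -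
        Complex.exp (2 * (r * ζ)) * (ζ * Complex.exp (r * ζ))) / (Complex.exp (r * ζ) - lam) ^ 2)
        = ζ * (2 * Complex.exp (2 * (r * ζ)) * (Complex.exp (r * ζ) - lam)⁻¹ -
          Complex.exp (3 * (r * ζ)) * ((Complex.exp (r * ζ) - lam)⁻¹) ^ 2) := by
      have : Complex.exp (3 * (r * ζ)) = Complex.exp (2 * (r * ζ)) * Complex.exp (r * ζ) := by
        rw [← Complex.exp_add]; congr 1; ring
      rw [this]
      field_simp
    have hζn : ‖ζ‖ ≤ (1 + τ) * (|x| + π + 1) := by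
      have : ‖ζ‖ ≤ |x - τ| + |y| := by
        have := Complex.norm_le_abs_re_add_abs_im ζ
        rwa [hre, show ζ.im = y by simp [hζ]] at this
      have h4 : |x - τ| ≤ |x| + τ := by
        have := abs_sub x τ
        rwa [abs_of_nonneg hτ] at this
      nlinarith [abs_nonneg x, Real.pi_pos]
    have hq : ∀ q : ℝ, 2 ≤ q → q ≤ 3 → Real.exp (q * (r * (x - τ))) ≤
        Real.exp (-(2 * ρ * τ)) * (Real.exp (2 * β * x) + Real.exp (3 * x)) := by
      intro q hq2 hq3
      have e : q * (r * (x - τ)) = -(q * r * τ) + q * r * x := by ring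
      rw [e, Real.exp_add]
      have hqr : 2 * ρ ≤ q * r := by nlinarith [hr.1]
      have hqr3 : q * r ≤ 3 := by nlinarith
      refine mul_le_mul (Real.exp_le_exp.2 ?_) ?_ (Real.exp_pos _).le (Real.exp_pos _).le
      · nlinarith
      · rcases le_total 0 x with hx | hx
        · have : Real.exp (q * r * x) ≤ Real.exp (3 * x) := Real.exp_le_exp.2 (by nlinarith)
          linarith [Real.exp_pos (2 * β * x)]
        · have : Real.exp (q * r * x) ≤ Real.exp (2 * β * x) :=
            Real.exp_le_exp.2 (by nlinarith)
          linarith [Real.exp_pos (3 * x)]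
    have n2 : ‖Complex.exp (2 * (r * ζ))‖ = Real.exp (2 * (r * (x - τ))) := by
      rw [Complex.norm_exp]; congr 1; simp [hre]
    have n3 : ‖Complex.exp (3 * (r * ζ))‖ = Real.exp (3 * (r * (x - τ))) := by
      rw [Complex.norm_exp]; congr 1; simp [hre]
    set W := Real.exp (-(2 * ρ * τ)) * (Real.exp (2 * β * x) + Real.exp (3 * x)) with hW
    have hW0 : 0 ≤ W := by positivity
    have hin : ‖2 * Complex.exp (2 * (r * ζ)) * (Complex.exp (r * ζ) - lam)⁻¹ -
          Complex.exp (3 * (r * ζ)) * ((Complex.exp (r * ζ) - lam)⁻¹) ^ 2‖ ≤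
        2 * W * c⁻¹ + W * (c⁻¹) ^ 2 := by
      refine (norm_sub_le _ _).trans ?_
      rw [norm_mul, norm_mul, norm_mul, norm_pow, n2, n3]
      have := hq 2 (by norm_num) (by norm_num)
      have := hq 3 (by norm_num) (by norm_num)
      have h22 : ‖(2 : ℂ)‖ = 2 := by simp
      rw [h22]
      gcongr
    rw [eq, norm_mul]
    refine (mul_le_mul hζn hin (norm_nonneg _) ?_).trans (le_of_eq ?_)
    · have := Real.pi_pos; positivity
    · rw [hW]; ring
  exact norm_image_sub_le_of_norm_deriv_le_segment' hder hbound σ ⟨h2, le_rfl⟩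

lemma aux_pi {N X : ℝ} (hN : 0 ≤ N) (h : 2 * π * N ≤ X + X) : N ≤ X := by
  have hpi3 := Real.pi_gt_three
  have : 1 * N ≤ π * N := mul_le_mul_of_nonneg_right (by linarith) hN
  linarith

set_option maxHeartbeats 1600000 in
lemma inj_main {lam : ℂ} (hl : lam.re < 0) {β : ℝ} (hβ : 0 < β) (hβ1 : β < 1) :
    ∃ T : ℝ, 1 < T ∧ ∀ t, T ≤ t → ∀ ρ σ : ℝ, β ≤ ρ → ρ < σ → σ ≤ 1 →
      mittagLeffler ρ (lam * ((t ^ ρ : ℝ) : ℂ)) ≠ mittagLeffler σ (lam * ((t ^ σ : ℝ) : ℂ)) := by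
  obtain ⟨θ, c, h1, h2, hc, hb⟩ := lower_bound hl
  have hcos : Real.cos θ < 0 := Real.cos_neg_of_pi_div_two_lt_of_lt h1 (by linarith [Real.pi_pos])
  have hp := Real.pi_pos
  have hθ0 : 0 ≤ θ := by linarith
  obtain ⟨δ, hδd⟩ : ∃ δ, δ = -Real.cos θ := ⟨_, rfl⟩
  have hδ : 0 < δ := by linarith
  set M : ℝ := (2 * c⁻¹ + (c⁻¹) ^ 2) * ∫ x : ℝ, (|x| + π + 1) *
    (Real.exp (2 * β * x) + Real.exp (3 * x)) * Real.exp (-(δ * Real.exp x)) with hM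
  have hcosy : ∀ y, (y = θ ∨ y = -θ) → Real.cos y = -δ := by
    rintro y (rfl | rfl) <;> simp [hδd]
  have habsy : ∀ y, (y = θ ∨ y = -θ) → |y| ≤ θ := by
    rintro y (rfl | rfl)
    · rw [abs_of_nonneg hθ0]
    · rw [abs_neg, abs_of_nonneg hθ0]
  have hEE : ∀ y, (y = θ ∨ y = -θ) → ∀ x : ℝ, ‖Complex.exp (Complex.exp (x + y * Complex.I))‖ =
      Real.exp (-(δ * Real.exp x)) := by
    intro y hy x
    rw [Complex.norm_exp, Complex.exp_re]
    simp [hcosy y hy]; ring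
  have hne : ∀ ρ : ℝ, 0 < ρ → ρ ≤ 1 → ∀ ζ : ℂ, |ζ.im| ≤ θ → Complex.exp (ρ * ζ) - lam ≠ 0 := by
    intro ρ h0 h1 ζ hζ h
    have := hb ρ h0 h1 ζ hζ
    rw [h, norm_zero] at this; linarith
  -- the integrand of the remainder
  have hQi : ∀ y, (y = θ ∨ y = -θ) → ∀ ρ τ : ℝ, 0 < ρ → ρ ≤ 1 → Integrable (fun x : ℝ =>
      Complex.exp (Complex.exp (x + y * Complex.I)) * ψ lam (ρ * (x + y * Complex.I - τ))) := by
    intro y hy ρ τ h0 h1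
    have hg := (integrable_g (a := 2 * ρ) (by linarith) hδ).const_mul
      (c⁻¹ * Real.exp (-(2 * ρ * τ)))
    have him : ∀ x : ℝ, |((x : ℂ) + y * Complex.I - τ).im| ≤ θ := fun x => by
      simpa using habsy y hy
    refine hg.mono' (Continuous.aestronglyMeasurable ?_) (Eventually.of_forall fun x => ?_)
    · unfold ψ
      refine Continuous.mul (by fun_prop) (Continuous.div (by fun_prop) (by fun_prop) fun x => ?_)
      exact hne ρ h0 h1 _ (him x)
    · rw [norm_mul, hEE y hy, ψ, norm_div, Complex.norm_exp, div_eq_mul_inv]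
      have hi : ‖Complex.exp (ρ * (x + y * Complex.I - τ)) - lam‖⁻¹ ≤ c⁻¹ :=
        inv_anti₀ hc (hb ρ h0 h1 _ (him x))
      have er : (2 * ((ρ : ℂ) * (x + y * Complex.I - τ))).re = 2 * ρ * x - 2 * ρ * τ := by
        simp; ring
      rw [er]
      calc Real.exp (-(δ * Real.exp x)) * (Real.exp (2 * ρ * x - 2 * ρ * τ) *
            ‖Complex.exp (ρ * (x + y * Complex.I - τ)) - lam‖⁻¹)
          ≤ Real.exp (-(δ * Real.exp x)) * (Real.exp (2 * ρ * x - 2 * ρ * τ) * c⁻¹) := by gcongr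
        _ = _ := by
          rw [sub_eq_add_neg, sub_eq_add_neg, Real.exp_add, Real.exp_add]; ring
  -- the representation
  have hrep : ∀ ρ τ : ℝ, 0 < ρ → ρ ≤ 1 →
      -lam * (2 * π * Complex.I * mittagLeffler ρ (lam * (Real.exp (ρ * τ) : ℝ))) =
      (Real.exp (-(ρ * τ)) : ℝ) * (2 * π * Complex.I * ((Real.Gamma (1 - ρ))⁻¹ : ℝ)) -
      ((∫ x : ℝ, Complex.exp (Complex.exp (x + θ * Complex.I)) *
          ψ lam (ρ * (x + θ * Complex.I - τ))) -
       ∫ x : ℝ, Complex.exp (Complex.exp (x + (-θ : ℝ) * Complex.I)) *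
          ψ lam (ρ * (x + (-θ : ℝ) * Complex.I - τ))) := by
    intro ρ τ h0 h1'
    have hμ : ∀ ζ : ℂ, |ζ.im| ≤ θ → Real.exp (ρ * τ) * c ≤
        ‖Complex.exp (ρ * ζ) - lam * (Real.exp (ρ * τ) : ℝ)‖ := by
      intro ζ hζ
      have e : Complex.exp (ρ * ζ) - lam * (Real.exp (ρ * τ) : ℝ) =
          (Real.exp (ρ * τ) : ℝ) * (Complex.exp (ρ * (ζ - τ)) - lam) := by
        have : Complex.exp (ρ * ζ) = Complex.exp (ρ * τ) * Complex.exp (ρ * (ζ - τ)) := by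
          rw [← Complex.exp_add]; congr 1; ring
        rw [this]; push_cast; ring
      rw [e, norm_mul, Complex.norm_real, Real.norm_eq_abs, abs_of_pos (Real.exp_pos _)]
      exact mul_le_mul_of_nonneg_left (hb ρ h0 h1' _ (by simpa using hζ)) (Real.exp_pos _).le
    have hl : ∀ y, (y = θ ∨ y = -θ) →
        -lam * ∫ x : ℝ, G ρ (lam * (Real.exp (ρ * τ) : ℝ)) (x + y * Complex.I) =
        (Real.exp (-(ρ * τ)) : ℝ) * (∫ x : ℝ, Fz (1 - ρ) (x + y * Complex.I)) -
        ∫ x : ℝ, Complex.exp (Complex.exp (x + y * Complex.I)) *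
          ψ lam (ρ * (x + y * Complex.I - τ)) := by
      intro y hy
      rw [← integral_const_mul, ← integral_const_mul, ← integral_sub
        ((Fz_int (by linarith) (by rw [hcosy y hy]; linarith)).const_mul _) (hQi y hy ρ τ h0 h1')]
      congr 1 with x
      exact G_eq (hne ρ h0 h1' _ (by simpa using habsy y hy))
    have hG := Fz_line (z := 1 - ρ) (by linarith) h1 h2
    have eG : 2 * π * Complex.I / Complex.Gamma ((1 - ρ : ℝ) : ℂ) =
        2 * π * Complex.I * ((Real.Gamma (1 - ρ))⁻¹ : ℝ) := by
      rw [Complex.Gamma_ofReal, div_eq_mul_inv, Complex.ofReal_inv]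
    rw [eG] at hG
    rw [ML_rep h0 h1 h2 (mul_pos (Real.exp_pos _) hc) hμ, ← hG, mul_sub,
      hl θ (Or.inl rfl), hl (-θ) (Or.inr rfl)]
    ring
  -- Lipschitz bound
  have hLip : ∀ y, (y = θ ∨ y = -θ) → ∀ ρ σ τ : ℝ, β ≤ ρ → ρ ≤ σ → σ ≤ 1 → 0 ≤ τ →
      ‖(∫ x : ℝ, Complex.exp (Complex.exp (x + y * Complex.I)) *
          ψ lam (σ * (x + y * Complex.I - τ))) -
       ∫ x : ℝ, Complex.exp (Complex.exp (x + y * Complex.I)) *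
          ψ lam (ρ * (x + y * Complex.I - τ))‖ ≤
        (1 + τ) * Real.exp (-(2 * ρ * τ)) * (σ - ρ) * M := by
    intro y hy ρ σ τ hρ hρσ hσ hτ
    rw [← integral_sub (hQi y hy σ τ (by linarith) hσ) (hQi y hy ρ τ (by linarith) (by linarith)),
      hM, ← mul_assoc, ← integral_const_mul]
    refine norm_integral_le_of_norm_le ((B_int hβ hβ1 hδ).const_mul _)
      (Eventually.of_forall fun x => ?_)
    rw [← mul_sub, norm_mul, hEE y hy]
    have := ψ_lip hc h2 hβ hb hρ hρσ hσ hτ (x := x) (habsy y hy)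
    refine (mul_le_mul_of_nonneg_left this (Real.exp_pos _).le).trans (le_of_eq ?_)
    ring
  -- choice of T
  have hlim : Tendsto (fun τ : ℝ => (1 + τ) * Real.exp (-(β * τ)) * M) atTop (𝓝 0) := by
    have a1 : Tendsto (fun τ : ℝ => Real.exp (-(β * τ))) atTop (𝓝 0) :=
      Real.tendsto_exp_neg_atTop_nhds_zero.comp (tendsto_id.const_mul_atTop hβ)
    have a2 := tendsto_rpow_mul_exp_neg_mul_atTop_nhds_zero 1 β hβ
    have a3 := (a1.add a2).mul_const M
    simp only [add_zero, zero_mul] at a3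
    refine a3.congr fun τ => ?_
    rw [Real.rpow_one, neg_mul]; ring
  have hev := (hlim.eventually (gt_mem_nhds hβ)).and (eventually_gt_atTop 0)
  obtain ⟨τ₀, hτ₀⟩ := hev.exists_forall_of_atTop
  refine ⟨Real.exp τ₀, Real.one_lt_exp_iff.2 (hτ₀ τ₀ le_rfl).2, ?_⟩
  intro t ht ρ σ hρ hρσ hσ heq
  have ht0 : 0 < t := (Real.exp_pos _).trans_le ht
  set τ := Real.log t with hτ
  have hτ1 : τ₀ ≤ τ := (Real.le_log_iff_exp_le ht0).2 ht
  obtain ⟨hsmall, hτpos⟩ := hτ₀ τ hτ1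
  have hpow : ∀ r : ℝ, t ^ r = Real.exp (r * τ) := fun r => by
    rw [Real.rpow_def_of_pos ht0, mul_comm]
  rw [hpow, hpow] at heq
  have r1 := hrep ρ τ (by linarith) (by linarith)
  have r2 := hrep σ τ (by linarith) hσ
  rw [heq] at r1
  have l1 := hLip θ (Or.inl rfl) ρ σ τ hρ hρσ.le hσ hτpos.le
  have l2 := hLip (-θ) (Or.inr rfl) ρ σ τ hρ hρσ.le hσ hτpos.le
  have hD : 2 * π * Complex.I * ((Real.exp (-(ρ * τ)) * (Real.Gamma (1 - ρ))⁻¹ -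
      Real.exp (-(σ * τ)) * (Real.Gamma (1 - σ))⁻¹ : ℝ) : ℂ) =
      -(((∫ x : ℝ, Complex.exp (Complex.exp (x + θ * Complex.I)) *
          ψ lam (σ * (x + θ * Complex.I - τ))) -
       ∫ x : ℝ, Complex.exp (Complex.exp (x + θ * Complex.I)) *
          ψ lam (ρ * (x + θ * Complex.I - τ))) -
      ((∫ x : ℝ, Complex.exp (Complex.exp (x + (-θ : ℝ) * Complex.I)) *
          ψ lam (σ * (x + (-θ : ℝ) * Complex.I - τ))) -
       ∫ x : ℝ, Complex.exp (Complex.exp (x + (-θ : ℝ) * Complex.I)) *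
          ψ lam (ρ * (x + (-θ : ℝ) * Complex.I - τ)))) := by
    push_cast at r1 r2 ⊢
    linear_combination r2 - r1
  have hN := congrArg norm hD
  rw [norm_neg] at hN
  have hN2 := hN.le.trans ((norm_sub_le _ _).trans (add_le_add l1 l2))
  rw [norm_mul, Complex.norm_real] at hN2
  have hpi : ‖2 * (π : ℂ) * Complex.I‖ = 2 * π := by
    simp [abs_of_pos hp]
  rw [hpi] at hN2
  have hg := gamma_diff (x := 1 - σ) (y := 1 - ρ) (β := β) (by linarith) (by linarith)
    (by linarith) (by linarith)
  have hmain : Real.exp (-(ρ * τ)) * (β * (σ - ρ)) ≤ Real.exp (-(ρ * τ)) * (Real.Gamma (1 - ρ))⁻¹ -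
      Real.exp (-(σ * τ)) * (Real.Gamma (1 - σ))⁻¹ := by
    have e1 : Real.exp (-(σ * τ)) ≤ Real.exp (-(ρ * τ)) := Real.exp_le_exp.2 (by nlinarith)
    have e2 : 0 ≤ (Real.Gamma (1 - σ))⁻¹ :=
      inv_nonneg.2 (Real.Gamma_nonneg_of_nonneg (by linarith))
    have e3 := mul_le_mul_of_nonneg_right e1 e2
    have e4 := mul_le_mul_of_nonneg_left hg (Real.exp_pos (-(ρ * τ))).le
    have e5 : 1 - ρ - (1 - σ) = σ - ρ := by ring
    rw [e5, mul_sub] at e4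
    linarith
  have hmain2 := hmain.trans ((le_abs_self _).trans_eq (Real.norm_eq_abs _).symm)
  set N := ‖Real.exp (-(ρ * τ)) * (Real.Gamma (1 - ρ))⁻¹ -
      Real.exp (-(σ * τ)) * (Real.Gamma (1 - σ))⁻¹‖
  have hd : 0 < σ - ρ := by linarith
  have hM0 : 0 ≤ M := by
    rw [hM]
    exact mul_nonneg (by positivity) (integral_nonneg fun x => by simp only [Pi.zero_apply]; positivity)
  have e6 : Real.exp (-(2 * ρ * τ)) = Real.exp (-(ρ * τ)) * Real.exp (-(ρ * τ)) := by
    rw [← Real.exp_add]; ring_nf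
  have e7 : Real.exp (-(ρ * τ)) ≤ Real.exp (-(β * τ)) := Real.exp_le_exp.2 (by nlinarith)
  have hN0 : 0 ≤ N := norm_nonneg _
  have e8 : N ≤ (1 + τ) * Real.exp (-(2 * ρ * τ)) * (σ - ρ) * M := aux_pi hN0 hN2
  have e9 : (1 + τ) * Real.exp (-(2 * ρ * τ)) * (σ - ρ) * M ≤
      (Real.exp (-(ρ * τ)) * (σ - ρ)) * ((1 + τ) * Real.exp (-(β * τ)) * M) := by
    rw [e6]
    calc _ = (Real.exp (-(ρ * τ)) * (σ - ρ)) * ((1 + τ) * Real.exp (-(ρ * τ)) * M) := by ring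
      _ ≤ _ := by gcongr
  have e10 := mul_lt_mul_of_pos_left hsmall (mul_pos (Real.exp_pos (-(ρ * τ))) hd)
  linarith
end MLProof

/-- **Theorem (Caputo case, reduced inverse problem).** Let `K` be an invertible
`m × m` complex matrix, `Re λ_l < 0` for all `l`, and `0 < β₀ < 1`. Then there is
`T₀ > 1` such that for every `t₀ ≥ T₀` and every data vector `d` whose transformed
components `(K⁻¹ d)_l` lie in the range of `ρ ↦ E_ρ(λ_l t₀^ρ)` over `[β₀, 1)`,
there is a unique vector-order `B ∈ [β₀, 1]^m` with
`∑_l K_{j,l} E_{B_l}(λ_l t₀^{B_l}) = d_j` for all `j`. -/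
theorem caputo_inverse_problem (m : ℕ) (hm : 1 ≤ m)
    (K : Matrix (Fin m) (Fin m) ℂ) (hK : IsUnit K)
    (lam : Fin m → ℂ) (hlam : ∀ l, (lam l).re < 0)
    (β₀ : ℝ) (hβ₀ : 0 < β₀) (hβ₀1 : β₀ < 1) :
    ∃ T₀ : ℝ, 1 < T₀ ∧ ∀ t₀ : ℝ, T₀ ≤ t₀ →
      ∀ d : Fin m → ℂ,
        (∀ l, K⁻¹.mulVec d l ∈
          (fun ρ : ℝ => mittagLeffler ρ (lam l * ((t₀ ^ ρ : ℝ) : ℂ))) '' Set.Ico β₀ 1) →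
        ∃! B : Fin m → ℝ, (∀ l, B l ∈ Set.Icc β₀ 1) ∧
          ∀ j, ∑ l, K j l * mittagLeffler (B l) (lam l * ((t₀ ^ (B l) : ℝ) : ℂ)) = d j := by
  choose T hT1 hT using fun l => MLProof.inj_main (hlam l) hβ₀ hβ₀1
  have hdet : IsUnit K.det := (Matrix.isUnit_iff_isUnit_det K).1 hK
  have hTs : ∀ l, T l ≤ ∑ l, T l := fun l =>
    Finset.single_le_sum (f := T) (fun i _ => (zero_lt_one.trans (hT1 i)).le) (Finset.mem_univ l)
  have hs0 : 0 ≤ ∑ l, T l := Finset.sum_nonneg fun i _ => (zero_lt_one.trans (hT1 i)).le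
  refine ⟨2 + ∑ l, T l, by linarith, ?_⟩
  intro t₀ ht d hd
  choose r hr hrd using hd
  have hTt : ∀ l, T l ≤ t₀ := fun l => by linarith [hTs l]
  refine ⟨r, ⟨fun l => ⟨(hr l).1, (hr l).2.le⟩, fun j => ?_⟩, ?_⟩
  · have e : K.mulVec (K⁻¹.mulVec d) = d := by
      rw [Matrix.mulVec_mulVec, Matrix.mul_nonsing_inv K hdet, Matrix.one_mulVec]
    have ej := congrFun e j
    rw [Matrix.mulVec, dotProduct] at ej
    rw [← ej]
    exact Finset.sum_congr rfl fun l _ => by rw [← hrd l]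
  · rintro B ⟨hB, hBd⟩
    have e : K.mulVec (fun l => mittagLeffler (B l) (lam l * ((t₀ ^ (B l) : ℝ) : ℂ))) = d := by
      funext j
      exact hBd j
    have e2 : (fun l => mittagLeffler (B l) (lam l * ((t₀ ^ (B l) : ℝ) : ℂ))) = K⁻¹.mulVec d := by
      rw [← e, Matrix.mulVec_mulVec, Matrix.nonsing_inv_mul K hdet, Matrix.one_mulVec]
    funext l
    have e3 := (congrFun e2 l).trans (hrd l).symm
    rcases lt_trichotomy (B l) (r l) with h | h | h
    · exact absurd e3 (hT l t₀ (hTt l) _ _ (hB l).1 h (hr l).2.le)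
    · exact h
    · exact absurd e3.symm (hT l t₀ (hTt l) _ _ (hr l).1 h (hB l).2)
end

section
/- Let m ≥ 1, let K be an invertible m × m complex matrix, let λ₁, …, λ_m ∈ ℂ satisfy Re λ_l < 0 and |Re λ_l| ≠ |Im λ_l| for every l, and let 0 < β₀ < 1. Then there exists T₁ > 1 such that for every t₀ ≥ T₁ the following holds: if d ∈ ℂ^m is such that for every l the l-th component b_l of the vector K⁻¹·d lies in the image of [β₀, 1) under ρ ↦ t₀^{ρ−1}·E_{ρ,ρ}(λ_l·t₀^ρ), then there exists a unique vector B = (β₁*, …, β_m*) with β_l* ∈ [β₀, 1] for every l such that ∑_{l=1}^m K_{j,l} · t₀^{β_l*−1}·E_{β_l*,β_l*}(λ_l·t₀^{β_l*}) = d_j for every j = 1, …, m. -/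
/-- The two-parameter Mittag-Leffler function with equal parameters,
`E_{β,β}(z) = ∑ₖ zᵏ / Γ(βk + β)`. -/
noncomputable def mittagLeffler2 (β : ℝ) (z : ℂ) : ℂ :=
  ∑' k : ℕ, z ^ k / Complex.Gamma (β * k + β)


open MeasureTheory Complex Set Filter Topology in
theorem RL_laplace_diff (w : ℝ) (hw : 0 < w) :
    DifferentiableOn ℂ (fun r : ℂ => ∫ x in Ioi (0:ℝ), ((x ^ (w - 1) : ℝ) : ℂ) * cexp (-(r * x)))
      {r : ℂ | 0 < r.re} := by
  intro r hr
  simp only [mem_ofPred_eq] at hr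
  refine DifferentiableAt.differentiableWithinAt ?_
  have hI : ∀ a : ℝ, 0 < a → ∀ c : ℝ, 0 < c →
      IntegrableOn (fun x : ℝ => x ^ (a - 1) * Real.exp (- c * x)) (Ioi 0) := by
    intro a ha c hc
    have := integrableOn_rpow_mul_exp_neg_mul_rpow (s := a - 1) (p := 1) (b := c) (by linarith) one_pos hc
    simpa using this
  have hmeas : ∀ (a : ℝ) (z : ℂ), AEStronglyMeasurable
      (fun x : ℝ => ((x ^ a : ℝ) : ℂ) * cexp (-(z * x))) (volume.restrict (Ioi 0)) := by
    intro a z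
    apply Measurable.aestronglyMeasurable
    fun_prop
  have hnorm : ∀ (a : ℝ) (z : ℂ) (x : ℝ), 0 < x → ‖((x ^ a : ℝ) : ℂ) * cexp (-(z * x))‖ =
      x ^ a * Real.exp (- z.re * x) := by
    intro a z x hx
    rw [norm_mul, Complex.norm_exp, Complex.norm_real, Real.norm_of_nonneg (by positivity)]
    simp
  have key := hasDerivAt_integral_of_dominated_loc_of_deriv_le
    (μ := volume.restrict (Ioi (0:ℝ))) (𝕜 := ℂ) (x₀ := r) (s := {z : ℂ | r.re / 2 < z.re})
    (F := fun z x => ((x ^ (w - 1) : ℝ) : ℂ) * cexp (-(z * x)))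
    (F' := fun z x => -(((x ^ (w + 1 - 1) : ℝ) : ℂ) * cexp (-(z * x))))
    (bound := fun x => x ^ (w + 1 - 1) * Real.exp (- (r.re / 2) * x))
    ?_ ?_ ?_ ?_ ?_ ?_ ?_
  · exact key.2.differentiableAt
  · exact (isOpen_lt continuous_const Complex.continuous_re).mem_nhds (by simp; linarith)
  · exact Eventually.of_forall fun z => hmeas _ z
  · refine Integrable.mono' (hI w hw r.re hr) (hmeas _ r) ?_
    refine (ae_restrict_mem measurableSet_Ioi).mono fun x hx => ?_
    rw [hnorm _ _ _ hx]
  · exact (hmeas _ r).neg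
  · refine (ae_restrict_mem measurableSet_Ioi).mono fun x hx z hz => ?_
    rw [norm_neg, hnorm _ _ _ hx]
    have hx' : (0:ℝ) < x := hx
    have hz' : r.re / 2 < z.re := hz
    gcongr
  · exact hI (w + 1) (by linarith) (r.re / 2) (by linarith)
  · refine (ae_restrict_mem measurableSet_Ioi).mono fun x hx z hz => ?_
    have hx' : (0:ℝ) < x := hx
    have h1 : HasDerivAt (fun z : ℂ => -(z * x)) (-(1 * x)) z := ((hasDerivAt_id z).mul_const _).neg
    have h2 := (h1.cexp).const_mul ((x ^ (w - 1) : ℝ) : ℂ)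
    refine h2.congr_deriv ?_
    have : x ^ (w + 1 - 1) = x ^ (w - 1) * x := by
      rw [← Real.rpow_add_one hx'.ne']; congr 1; ring
    rw [this]; push_cast; ring

open MeasureTheory Complex Set Filter Topology in
theorem RL_laplace (w : ℝ) (hw : 0 < w) (r : ℂ) (hr : 0 < r.re) :
    ∫ x in Ioi (0:ℝ), ((x ^ (w - 1) : ℝ) : ℂ) * cexp (-(r * x)) = r ^ (-(w:ℂ)) * Complex.Gamma w := by
  have hopen : IsOpen {r : ℂ | 0 < r.re} := isOpen_lt continuous_const Complex.continuous_re
  have h1 := (RL_laplace_diff w hw).analyticOnNhd hopen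
  have h2 : AnalyticOnNhd ℂ (fun r : ℂ => r ^ (-(w:ℂ)) * Complex.Gamma w) {r : ℂ | 0 < r.re} := by
    refine DifferentiableOn.analyticOnNhd (fun z hz => ?_) hopen
    have : z ∈ slitPlane := Or.inl hz
    exact ((differentiableAt_id.cpow_const this).mul_const _).differentiableWithinAt
  have hc : IsPreconnected {r : ℂ | 0 < r.re} := (convex_halfSpace_re_gt 0).isPreconnected
  refine h1.eqOn_of_preconnected_of_frequently_eq h2 hc (z₀ := 1) (by simp) ?_ hr
  have hreal : ∀ y : ℝ, 0 < y → ∫ x in Ioi (0:ℝ), ((x ^ (w - 1) : ℝ) : ℂ) * cexp (-((y:ℂ) * x))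
      = (y:ℂ) ^ (-(w:ℂ)) * Complex.Gamma w := by
    intro y hy
    have := Complex.integral_cpow_mul_exp_neg_mul_Ioi (a := w) (r := y) (by simpa) hy
    rw [one_div, inv_cpow _ _ (by rw [arg_ofReal_of_nonneg hy.le]; exact Real.pi_pos.ne), ← cpow_neg] at this
    rw [← this]
    refine setIntegral_congr_fun measurableSet_Ioi fun x hx => ?_
    have hx' : (0:ℝ) < x := hx
    rw [ofReal_cpow hx'.le]; push_cast; rfl
  have ht : Tendsto (fun n : ℕ => ((1 + 1 / ((n:ℝ) + 1) : ℝ) : ℂ)) atTop (𝓝[≠] 1) := by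
    rw [tendsto_nhdsWithin_iff]
    constructor
    · have : Tendsto (fun n : ℕ => (1 + 1 / ((n:ℝ) + 1) : ℝ)) atTop (𝓝 (1 + 0)) :=
        tendsto_const_nhds.add tendsto_one_div_add_atTop_nhds_zero_nat
      have h := (Complex.continuous_ofReal.tendsto _).comp this
      simpa [Function.comp_def] using h
    · refine Eventually.of_forall fun n => ?_
      simp only [mem_compl_iff, mem_singleton_iff]
      have : (0:ℝ) < 1 / ((n:ℝ) + 1) := by positivity
      intro h
      have h' : (1 + 1 / ((n:ℝ) + 1) : ℝ) = 1 := by exact_mod_cast h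
      linarith
  refine ht.frequently (Frequently.of_forall fun n => ?_)
  exact hreal _ (by positivity)


/-- The vertical line `Re s = 1`. -/
noncomputable def RLs (y : ℝ) : ℂ := 1 + (y : ℂ) * Complex.I

theorem RLs_re (y : ℝ) : (RLs y).re = 1 := by simp [RLs]

theorem RLs_ne (y : ℝ) : RLs y ≠ 0 := by
  intro h
  have := RLs_re y
  rw [h] at this
  simp at this

theorem RLs_norm_sq (y : ℝ) : ‖RLs y‖ ^ 2 = 1 + y ^ 2 := by
  rw [← Complex.normSq_eq_norm_sq]
  simp [RLs, Complex.normSq_apply]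
  ring

theorem RLs_norm_ge (y : ℝ) : 1 ≤ ‖RLs y‖ := by
  have := RLs_norm_sq y
  have h0 := norm_nonneg (RLs y)
  nlinarith [sq_nonneg y]

theorem RLs_slit (y : ℝ) : RLs y ∈ Complex.slitPlane := Or.inl (by rw [RLs_re]; exact one_pos)

@[fun_prop]
theorem RLs_cont : Continuous RLs := by
  unfold RLs
  fun_prop

theorem RLs_exp_norm (y : ℝ) : ‖Complex.exp (RLs y)‖ = Real.exp 1 := by
  rw [Complex.norm_exp, RLs_re]

@[fun_prop]
theorem RLs_cpow_cont (w : ℂ) : Continuous (fun y => RLs y ^ w) :=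
  RLs_cont.cpow continuous_const (fun y => RLs_slit y)

open MeasureTheory Complex Set Filter Topology in
theorem RL_hankel_integrable (w : ℝ) (hw : 2 ≤ w) :
    Integrable (fun y : ℝ => RLs y ^ (-(w:ℂ))) := by
  refine integrable_inv_one_add_sq.mono' (RLs_cpow_cont _).aestronglyMeasurable ?_
  refine Eventually.of_forall fun y => ?_
  have : (-(w:ℂ)) = ((-w : ℝ) : ℂ) := by push_cast; rfl
  rw [this, Complex.norm_cpow_real, ← RLs_norm_sq, ← Real.rpow_natCast, ← Real.rpow_neg (norm_nonneg _)]
  exact Real.rpow_le_rpow_of_exponent_le (RLs_norm_ge y) (by push_cast; linarith)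

open MeasureTheory Complex Set Filter Topology FourierTransform in
theorem RL_hankel (w : ℝ) (hw : 2 ≤ w) :
    ∫ y : ℝ, cexp (RLs y) * RLs y ^ (-(w:ℂ)) = 2 * Real.pi / Complex.Gamma w := by
  have hw0 : 0 < w := by linarith
  set g : ℝ → ℂ := indicator (Ioi 0) (fun x => ((x ^ (w - 1) : ℝ) : ℂ) * cexp (-x)) with hg
  have hF : 𝓕 g = fun ξ => RLs (2 * Real.pi * ξ) ^ (-(w:ℂ)) * Complex.Gamma w := by
    ext ξ
    rw [Real.fourier_real_eq_integral_exp_smul]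
    have h1 := RL_laplace w hw0 (RLs (2 * Real.pi * ξ)) (by rw [RLs_re]; exact one_pos)
    rw [← h1, ← integral_indicator measurableSet_Ioi]
    congr 1
    ext x
    by_cases hx : x ∈ Ioi (0:ℝ)
    · rw [hg, indicator_of_mem hx, indicator_of_mem hx, smul_eq_mul]
      rw [mul_left_comm, ← Complex.exp_add]
      congr 2
      simp only [RLs]
      push_cast
      ring
    · rw [hg, indicator_of_notMem hx, indicator_of_notMem hx, smul_zero]
  have hgi : Integrable g := by
    rw [hg, integrable_indicator_iff measurableSet_Ioi]
    have := (Real.GammaIntegral_convergent hw0)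
    refine Integrable.mono' this ?_ ?_
    · apply Measurable.aestronglyMeasurable
      fun_prop
    · refine (ae_restrict_mem measurableSet_Ioi).mono fun x hx => ?_
      have hx' : (0:ℝ) < x := hx
      rw [norm_mul, Complex.norm_exp, Complex.norm_real, Real.norm_of_nonneg (by positivity)]
      simp [mul_comm]
  have hFi : Integrable (𝓕 g) := by
    rw [hF]
    exact ((RL_hankel_integrable w hw).comp_mul_left' (by positivity)).mul_const _
  have hcont : ContinuousAt g 1 := by
    have h2 : ContinuousAt (fun x : ℝ => ((x ^ (w - 1) : ℝ) : ℂ) * cexp (-x)) 1 := by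
      refine ContinuousAt.mul ?_ (by fun_prop)
      exact Complex.continuous_ofReal.continuousAt.comp
        (Real.continuousAt_rpow_const _ _ (Or.inl one_ne_zero))
    refine h2.congr ?_
    filter_upwards [Ioi_mem_nhds (show (0:ℝ) < 1 by norm_num)] with x hx
    rw [hg, indicator_of_mem hx]
  have hinv := hgi.fourierInv_fourier_eq hFi hcont
  rw [Real.fourierInv_eq', hF] at hinv
  have hg1 : g 1 = cexp (-1) := by
    rw [hg, indicator_of_mem (by simp)]; simp
  rw [hg1] at hinv
  have hcv := Measure.integral_comp_mul_left (fun y : ℝ => cexp (RLs y) * RLs y ^ (-(w:ℂ))) (2 * Real.pi)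
  have hG : Complex.Gamma w ≠ 0 := Complex.Gamma_ne_zero_of_re_pos (by simpa)
  have heq : ∫ ξ : ℝ, cexp (RLs (2 * Real.pi * ξ)) * RLs (2 * Real.pi * ξ) ^ (-(w:ℂ))
      = (cexp 1 / Complex.Gamma w) * cexp (-1) := by
    rw [← hinv, ← integral_const_mul]
    congr 1
    ext ξ
    have : cexp (RLs (2 * Real.pi * ξ)) = cexp 1 * cexp (↑(2 * Real.pi * inner ℝ ξ (1:ℝ)) * I) := by
      rw [← Complex.exp_add]; congr 1; simp [RLs]
    rw [this, smul_eq_mul]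
    field_simp
  rw [heq] at hcv
  have he : cexp 1 * cexp (-1) = 1 := by rw [← Complex.exp_add]; simp
  rw [div_mul_eq_mul_div, he, abs_of_pos (by positivity)] at hcv
  rw [Complex.real_smul] at hcv
  have hpi : (Real.pi : ℂ) ≠ 0 := by exact_mod_cast Real.pi_ne_zero
  push_cast at hcv
  rw [div_eq_iff hG] at hcv
  rw [eq_div_iff hG]
  have h3 := congrArg (fun q => 2 * (Real.pi:ℂ) * q) hcv
  simp only [mul_one] at h3
  rw [h3]
  field_simp


noncomputable def RLc1 (r : ℂ) : ℂ := 6 * r - 11 * r ^ 2 + 6 * r ^ 3 - r ^ 4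
noncomputable def RLc2 (r : ℂ) : ℂ := 22 * r ^ 2 - 36 * r ^ 3 + 14 * r ^ 4
noncomputable def RLc3 (r : ℂ) : ℂ := 36 * r ^ 3 - 36 * r ^ 4
noncomputable def RLc4 (r : ℂ) : ℂ := 24 * r ^ 4

noncomputable def RLSS (r u z : ℂ) : ℂ :=
  (u - z)⁻¹ * (RLc1 r * (u / (u - z)) + RLc2 r * (u / (u - z)) ^ 2 + RLc3 r * (u / (u - z)) ^ 3
    + RLc4 r * (u / (u - z)) ^ 4)

noncomputable def RLP (x : ℂ) : ℂ := x * (x + 1) * (x + 2) * (x + 3)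

theorem RL_series (r u z : ℂ) (h : ‖z‖ < ‖u‖) :
    HasSum (fun k : ℕ => RLP (r * k + r) * (z ^ k / u ^ (k + 1))) (RLSS r u z) := by
  have hu : u ≠ 0 := by
    rintro rfl
    simp at h
    exact absurd h (not_lt.mpr (norm_nonneg z))
  have huz : u - z ≠ 0 := by
    intro h'
    rw [sub_eq_zero] at h'
    rw [h'] at h
    exact lt_irrefl _ h
  have hr : ‖z / u‖ < 1 := by
    rw [norm_div, div_lt_one (by positivity)]; exact h
  have H := fun j => (hasSum_choose_mul_geometric_of_norm_lt_one (𝕜 := ℂ) j hr)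
  have H2 := ((((H 1).mul_left (RLc1 r)).add ((H 2).mul_left (RLc2 r))).add
    ((H 3).mul_left (RLc3 r))).add ((H 4).mul_left (RLc4 r))
  have H3 := H2.mul_left u⁻¹
  have h1z : 1 - z / u = (u - z) / u := by field_simp
  have hch1 : ∀ n : ℕ, (((n+1).choose 1 : ℕ) : ℂ) = (n+1) := by intro n; simp
  have hch2 : ∀ n : ℕ, (((n+2).choose 2 : ℕ) : ℂ) = (n+1)*(n+2)/2 := by
    intro n
    have := Nat.ascFactorial_eq_factorial_mul_choose n 2
    simp only [Nat.ascFactorial, Nat.factorial] at this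
    have h := congrArg (fun x : ℕ => (x : ℂ)) this
    push_cast at h
    linear_combination (-1/2) * h
  have hch3 : ∀ n : ℕ, (((n+3).choose 3 : ℕ) : ℂ) = (n+1)*(n+2)*(n+3)/6 := by
    intro n
    have := Nat.ascFactorial_eq_factorial_mul_choose n 3
    simp only [Nat.ascFactorial, Nat.factorial] at this
    have h := congrArg (fun x : ℕ => (x : ℂ)) this
    push_cast at h
    linear_combination (-1/6) * h
  have hch4 : ∀ n : ℕ, (((n+4).choose 4 : ℕ) : ℂ) = (n+1)*(n+2)*(n+3)*(n+4)/24 := by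
    intro n
    have := Nat.ascFactorial_eq_factorial_mul_choose n 4
    simp only [Nat.ascFactorial, Nat.factorial] at this
    have h := congrArg (fun x : ℕ => (x : ℂ)) this
    push_cast at h
    linear_combination (-1/24) * h
  have hval : RLSS r u z = u⁻¹ * (RLc1 r * (1 / (1 - z / u) ^ (1 + 1)) + RLc2 r * (1 / (1 - z / u) ^ (2 + 1)) +
      RLc3 r * (1 / (1 - z / u) ^ (3 + 1)) + RLc4 r * (1 / (1 - z / u) ^ (4 + 1))) := by
    rw [h1z, RLSS]
    simp only [Nat.reduceAdd, div_pow]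
    field_simp
  rw [hval]
  refine H3.congr_fun fun k => ?_
  rw [hch1, hch2, hch3, hch4, div_pow, pow_succ u k]
  simp only [RLP, RLc1, RLc2, RLc3, RLc4]
  field_simp
  ring

theorem RL_gap (ρ : ℝ) (h0 : 0 ≤ ρ) (h1 : ρ ≤ 1) (y : ℝ) : 0 ≤ (RLs y ^ (ρ:ℂ)).re := by
  rw [Complex.cpow_ofReal_re]
  refine mul_nonneg (by positivity) (Real.cos_nonneg_of_mem_Icc ?_)
  have h2 : |(RLs y).arg| ≤ Real.pi / 2 := Complex.abs_arg_le_pi_div_two_iff.mpr (by rw [RLs_re]; norm_num)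
  have h3 : |(RLs y).arg * ρ| ≤ Real.pi / 2 := by
    rw [abs_mul, abs_of_nonneg h0]
    nlinarith [abs_nonneg (RLs y).arg]
  exact abs_le.mp h3

theorem RL_unorm (ρ : ℝ) (h0 : 0 ≤ ρ) (y : ℝ) : 1 ≤ ‖RLs y ^ (ρ:ℂ)‖ := by
  rw [Complex.norm_cpow_real]
  exact Real.one_le_rpow (RLs_norm_ge y) h0

def RLU : Set ℂ := {z : ℂ | z.re < 0} ∪ Metric.ball 0 1

theorem RL_delta (ρ : ℝ) (h0 : 0 ≤ ρ) (h1 : ρ ≤ 1) (z : ℂ) (hz : z ∈ RLU) :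
    ∃ δ > 0, ∀ y, δ ≤ ‖RLs y ^ (ρ:ℂ) - z‖ := by
  rcases hz with hz | hz
  · have hz' : z.re < 0 := hz
    refine ⟨-z.re, by linarith, fun y => ?_⟩
    have := RL_gap ρ h0 h1 y
    have h2 := Complex.re_le_norm (RLs y ^ (ρ:ℂ) - z)
    rw [Complex.sub_re] at h2
    linarith
  · have hz' : ‖z‖ < 1 := by simpa using hz
    refine ⟨1 - ‖z‖, by linarith, fun y => ?_⟩
    have := RL_unorm ρ h0 y
    have h2 := norm_sub_norm_le (RLs y ^ (ρ:ℂ)) z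
    linarith

theorem RLU_preconn : IsPreconnected RLU := by
  refine IsPreconnected.union (-(1/2) : ℂ) ?_ ?_ (convex_halfSpace_re_lt 0).isPreconnected
    (convex_ball 0 1).isPreconnected
  · simp
  · simp; norm_num

theorem RLU_open : IsOpen RLU :=
  (isOpen_lt Complex.continuous_re continuous_const).union Metric.isOpen_ball

open MeasureTheory Complex Set Filter Topology in
theorem RL_gamma_bound (A w : ℝ) (hA : 0 < A) (hw : 0 < w) :
    A ^ w * Real.exp (-(A + 1)) / (A + 1) ≤ Real.Gamma w := by
  rw [Real.Gamma_eq_integral hw]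
  have hI := Real.GammaIntegral_convergent hw
  have hsub : Ioc A (A + 1) ⊆ Ioi 0 := fun x hx => lt_trans hA hx.1
  have h1 : ∫ x in Ioc A (A + 1), Real.exp (-x) * x ^ (w - 1) ≤ ∫ x in Ioi 0, Real.exp (-x) * x ^ (w - 1) := by
    refine setIntegral_mono_set hI ?_ hsub.eventuallyLE
    refine (ae_restrict_mem measurableSet_Ioi).mono fun x hx => ?_
    have hx' : (0:ℝ) < x := hx
    simp only [Pi.zero_apply]
    positivity
  refine le_trans ?_ h1
  have h2 : ∫ x in Ioc A (A + 1), A ^ w * Real.exp (-(A + 1)) / (A + 1) ≤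
      ∫ x in Ioc A (A + 1), Real.exp (-x) * x ^ (w - 1) := by
    refine setIntegral_mono_on (by simp) (hI.mono_set hsub) measurableSet_Ioc fun x hx => ?_
    have hx0 : 0 < x := lt_trans hA hx.1
    rw [Real.rpow_sub_one hx0.ne', mul_comm (Real.exp (-x)), div_mul_eq_mul_div]
    have h3 : A ^ w ≤ x ^ w := Real.rpow_le_rpow hA.le hx.1.le hw.le
    have h4 : Real.exp (-(A + 1)) ≤ Real.exp (-x) := Real.exp_le_exp.mpr (by linarith [hx.2])
    have h5 := hx.2
    gcongr
  simpa using h2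

open MeasureTheory Complex Set Filter Topology in
theorem RL_ML_bound (ρ : ℝ) (hρ : 0 < ρ) (R : ℝ) (hR : 0 < R) : ∃ C : ℝ, ∀ (k : ℕ) (z : ℂ), ‖z‖ ≤ R →
    ‖z ^ k / Complex.Gamma (ρ * k + ρ)‖ ≤ C * (1 / 2) ^ k := by
  set A : ℝ := (2 * R) ^ (1 / ρ) with hAdef
  have hA : 0 < A := by positivity
  refine ⟨(A + 1) / Real.exp (-(A + 1)) / (2 * R), fun k z hz => ?_⟩
  have hw : 0 < ρ * k + ρ := by positivity
  have hb := RL_gamma_bound A (ρ * k + ρ) hA hw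
  have hAw : A ^ (ρ * k + ρ) = (2 * R) ^ (k + 1) := by
    rw [hAdef, ← Real.rpow_mul (by positivity), ← Real.rpow_natCast]
    congr 1
    push_cast
    field_simp
  rw [hAw] at hb
  have hcast : Complex.Gamma (ρ * k + ρ) = ((Real.Gamma (ρ * k + ρ) : ℝ) : ℂ) := by
    rw [← Complex.Gamma_ofReal]; push_cast; rfl
  have hGp := Real.Gamma_pos_of_pos hw
  rw [hcast, norm_div, norm_pow, Complex.norm_real, Real.norm_of_nonneg hGp.le]
  calc ‖z‖ ^ k / Real.Gamma (ρ * k + ρ) ≤ R ^ k / ((2 * R) ^ (k + 1) * Real.exp (-(A + 1)) / (A + 1)) := by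
        gcongr
    _ = _ := by
        rw [pow_succ, mul_pow, one_div, inv_pow]
        field_simp

open MeasureTheory Complex Set Filter Topology in
theorem RL_ML_diff (ρ : ℝ) (hρ : 0 < ρ) : Differentiable ℂ (mittagLeffler2 ρ) := by
  intro z
  obtain ⟨C, hC⟩ := RL_ML_bound ρ hρ (‖z‖ + 1) (by positivity)
  have h := Complex.differentiableOn_tsum_of_summable_norm
    (U := Metric.ball (0:ℂ) (‖z‖ + 1)) (F := fun (k : ℕ) z => z ^ k / Complex.Gamma (ρ * k + ρ))
    (u := fun k => C * (1 / 2) ^ k) (summable_geometric_two.mul_left C)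
    (fun k => by fun_prop) Metric.isOpen_ball
    (fun k w hw => hC k w (by simpa using (mem_ball_zero_iff.mp hw).le))
  exact h.differentiableAt (Metric.isOpen_ball.mem_nhds (by simp))


theorem RL_P_gamma (x : ℝ) (hx : 0 < x) :
    RLP x / Complex.Gamma ((x + 4 : ℝ) : ℂ) = 1 / Complex.Gamma x := by
  have hG : Complex.Gamma x ≠ 0 := Complex.Gamma_ne_zero_of_re_pos (by simpa)
  have e0 : (x:ℂ) ≠ 0 := by exact_mod_cast hx.ne'
  have e1 : (x:ℂ) + 1 ≠ 0 := by exact_mod_cast (by positivity : (x:ℝ) + 1 ≠ 0)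
  have e2 : (x:ℂ) + 2 ≠ 0 := by exact_mod_cast (by positivity : (x:ℝ) + 2 ≠ 0)
  have e3 : (x:ℂ) + 3 ≠ 0 := by exact_mod_cast (by positivity : (x:ℝ) + 3 ≠ 0)
  have h4 : ((x + 4 : ℝ) : ℂ) = (x:ℂ) + 3 + 1 := by push_cast; ring
  have h3 : (x:ℂ) + 3 = (x:ℂ) + 2 + 1 := by ring
  have h2 : (x:ℂ) + 2 = (x:ℂ) + 1 + 1 := by ring
  have hval : Complex.Gamma ((x + 4 : ℝ) : ℂ) = RLP x * Complex.Gamma x := by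
    rw [h4, Complex.Gamma_add_one _ e3, RLP]
    nth_rewrite 2 [h3]
    rw [Complex.Gamma_add_one _ e2]
    have hh : Complex.Gamma ((x:ℂ) + 2) = Complex.Gamma ((x:ℂ) + 1 + 1) := by rw [h2]
    rw [hh, Complex.Gamma_add_one _ e1, Complex.Gamma_add_one _ e0]
    ring
  have hP : RLP x ≠ 0 := by
    rw [RLP]; exact mul_ne_zero (mul_ne_zero (mul_ne_zero e0 e1) e2) e3
  rw [hval]
  field_simp

noncomputable def RLk (y : ℝ) : ℂ := Complex.exp (RLs y) * (RLs y ^ 4)⁻¹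

@[fun_prop]
theorem RLk_cont : Continuous RLk := by
  unfold RLk
  refine Continuous.mul (by fun_prop) (Continuous.inv₀ (by fun_prop) fun y => pow_ne_zero _ (RLs_ne y))

theorem RLk_norm (y : ℝ) : ‖RLk y‖ = Real.exp 1 * ((1 + y ^ 2) ^ 2)⁻¹ := by
  rw [RLk, norm_mul, RLs_exp_norm, norm_inv, norm_pow, ← RLs_norm_sq]
  ring

theorem RLk_norm_le (y : ℝ) : ‖RLk y‖ ≤ Real.exp 1 * (1 + y ^ 2)⁻¹ := by
  rw [RLk_norm]
  gcongr
  nlinarith [sq_nonneg y]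

open MeasureTheory Complex Set Filter Topology in
theorem RLk_integrable_mul (f : ℝ → ℂ) (hf : AEStronglyMeasurable f) (C : ℝ) (hC : ∀ y, ‖f y‖ ≤ C) :
    Integrable (fun y => RLk y * f y) := by
  refine ((integrable_inv_one_add_sq.const_mul (Real.exp 1)).mul_const C).mono'
    (RLk_cont.aestronglyMeasurable.mul hf) (Eventually.of_forall fun y => ?_)
  rw [norm_mul]
  exact mul_le_mul (RLk_norm_le y) (hC y) (norm_nonneg _) (by positivity)

theorem RL_ratio (u z : ℂ) (δ Z : ℝ) (hδ : 0 < δ) (h : δ ≤ ‖u - z‖) (hz : ‖z‖ ≤ Z) :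
    ‖u / (u - z)‖ ≤ 1 + Z / δ ∧ ‖(u - z)⁻¹‖ ≤ δ⁻¹ := by
  have hp : 0 < ‖u - z‖ := lt_of_lt_of_le hδ h
  have hne : u - z ≠ 0 := norm_pos_iff.mp hp
  have hinv : ‖(u - z)⁻¹‖ ≤ δ⁻¹ := by
    rw [norm_inv]; gcongr
  refine ⟨?_, hinv⟩
  have : u / (u - z) = 1 + z * (u - z)⁻¹ := by field_simp; ring
  rw [this]
  refine (norm_add_le _ _).trans ?_
  rw [norm_one, norm_mul, div_eq_mul_inv]
  have hZ : 0 ≤ Z := (norm_nonneg z).trans hz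
  gcongr

theorem RL_poly4_norm (a b c d x : ℂ) (M : ℝ) (hx : ‖x‖ ≤ M) :
    ‖a * x + b * x ^ 2 + c * x ^ 3 + d * x ^ 4‖ ≤ ‖a‖ * M + ‖b‖ * M ^ 2 + ‖c‖ * M ^ 3 + ‖d‖ * M ^ 4 := by
  refine (norm_add_le _ _).trans (add_le_add ((norm_add_le _ _).trans (add_le_add
    ((norm_add_le _ _).trans (add_le_add ?_ ?_)) ?_)) ?_)
  all_goals
    simp only [norm_mul, norm_pow]
    gcongr

open MeasureTheory Complex Set Filter Topology in
theorem RL_int_diff (ρ : ℝ) (h0 : 0 ≤ ρ) (h1 : ρ ≤ 1) :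
    DifferentiableOn ℂ (fun z => ∫ y : ℝ, RLk y * RLSS ρ (RLs y ^ (ρ:ℂ)) z) RLU := by
  intro z hz
  refine DifferentiableAt.differentiableWithinAt ?_
  obtain ⟨δ, hδ, hgap⟩ := RL_delta ρ h0 h1 z hz
  have hum : Measurable (fun y => RLs y ^ (ρ:ℂ)) := (RLs_cpow_cont _).measurable
  have hmeas : ∀ x, Measurable (fun y => RLSS ρ (RLs y ^ (ρ:ℂ)) x) := by
    intro x
    unfold RLSS
    fun_prop
  have hgap2 : ∀ x ∈ Metric.ball z (δ / 2), ∀ y, δ / 2 ≤ ‖RLs y ^ (ρ:ℂ) - x‖ := by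
    intro x hx y
    have h2 : ‖x - z‖ < δ / 2 := by simpa [dist_eq_norm] using hx
    have h3 : RLs y ^ (ρ:ℂ) - z = (RLs y ^ (ρ:ℂ) - x) + (x - z) := by ring
    have h4 := norm_add_le (RLs y ^ (ρ:ℂ) - x) (x - z)
    rw [← h3] at h4
    linarith [hgap y]
  have hzn : ∀ x ∈ Metric.ball z (δ / 2), ‖x‖ ≤ ‖z‖ + δ := by
    intro x hx
    have h2 : ‖x - z‖ < δ / 2 := by simpa [dist_eq_norm] using hx
    have h4 := norm_add_le z (x - z)
    rw [add_sub_cancel] at h4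
    linarith
  set M : ℝ := 1 + (‖z‖ + δ) / (δ / 2) with hM
  have key := hasDerivAt_integral_of_dominated_loc_of_deriv_le
    (μ := (volume : Measure ℝ)) (𝕜 := ℂ) (x₀ := z) (s := Metric.ball z (δ / 2))
    (F := fun z y => RLk y * RLSS ρ (RLs y ^ (ρ:ℂ)) z)
    (F' := fun z y => RLk y * (((RLs y ^ (ρ:ℂ) - z)⁻¹) ^ 2 *
      (2 * RLc1 ρ * (RLs y ^ (ρ:ℂ) / (RLs y ^ (ρ:ℂ) - z)) + 3 * RLc2 ρ * (RLs y ^ (ρ:ℂ) / (RLs y ^ (ρ:ℂ) - z)) ^ 2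
      + 4 * RLc3 ρ * (RLs y ^ (ρ:ℂ) / (RLs y ^ (ρ:ℂ) - z)) ^ 3
      + 5 * RLc4 ρ * (RLs y ^ (ρ:ℂ) / (RLs y ^ (ρ:ℂ) - z)) ^ 4)))
    (bound := fun y => (Real.exp 1 * (1 + y ^ 2)⁻¹) * (((δ / 2)⁻¹) ^ 2 *
      (‖2 * RLc1 ρ‖ * M + ‖3 * RLc2 ρ‖ * M ^ 2 + ‖4 * RLc3 ρ‖ * M ^ 3 + ‖5 * RLc4 ρ‖ * M ^ 4)))
    ?_ ?_ ?_ ?_ ?_ ?_ ?_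
  · exact key.2.differentiableAt
  · exact Metric.ball_mem_nhds _ (by positivity)
  · exact Eventually.of_forall fun x => RLk_cont.aestronglyMeasurable.mul (hmeas x).aestronglyMeasurable
  · refine RLk_integrable_mul _ (hmeas z).aestronglyMeasurable ((δ / 2)⁻¹ *
      (‖RLc1 ρ‖ * M + ‖RLc2 ρ‖ * M ^ 2 + ‖RLc3 ρ‖ * M ^ 3 + ‖RLc4 ρ‖ * M ^ 4)) fun y => ?_
    have hzb : z ∈ Metric.ball z (δ / 2) := Metric.mem_ball_self (by positivity)
    obtain ⟨h3, h4⟩ := RL_ratio _ _ (δ / 2) _ (by positivity) (hgap2 z hzb y) (hzn z hzb)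
    rw [RLSS, norm_mul]
    have := RL_poly4_norm (RLc1 ρ) (RLc2 ρ) (RLc3 ρ) (RLc4 ρ) _ M h3
    gcongr
  · refine RLk_cont.aestronglyMeasurable.mul (Measurable.aestronglyMeasurable ?_)
    fun_prop
  · refine Eventually.of_forall fun y x hx => ?_
    obtain ⟨h3, h4⟩ := RL_ratio _ _ (δ / 2) _ (by positivity) (hgap2 x hx y) (hzn x hx)
    rw [norm_mul, norm_mul, norm_pow]
    have := RL_poly4_norm (2 * RLc1 ρ) (3 * RLc2 ρ) (4 * RLc3 ρ) (5 * RLc4 ρ) _ M h3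
    have h5 := RLk_norm_le y
    gcongr
  · exact (integrable_inv_one_add_sq.const_mul (Real.exp 1)).mul_const _
  · refine Eventually.of_forall fun y x hx => ?_
    have hne : RLs y ^ (ρ:ℂ) - x ≠ 0 := norm_pos_iff.mp (lt_of_lt_of_le (by positivity) (hgap2 x hx y))
    refine HasDerivAt.const_mul _ ?_
    unfold RLSS
    generalize RLs y ^ (ρ:ℂ) = u at *
    have hb : HasDerivAt (fun x => (u - x)⁻¹) (((u - x)⁻¹) ^ 2) x := by
      have := ((hasDerivAt_const x u).sub (hasDerivAt_id x)).inv hne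
      refine this.congr_deriv ?_
      simp only [Pi.sub_apply, id_eq]
      field_simp
      ring
    have ha : HasDerivAt (fun x => u / (u - x)) (u * ((u - x)⁻¹) ^ 2) x := hb.const_mul u
    have := hb.mul ((((ha.const_mul (RLc1 ρ)).add ((ha.pow 2).const_mul (RLc2 ρ))).add
      ((ha.pow 3).const_mul (RLc3 ρ))).add ((ha.pow 4).const_mul (RLc4 ρ)))
    refine this.congr_deriv ?_
    simp only [Pi.add_apply, Pi.pow_apply, div_eq_mul_inv, Nat.reduceSub, pow_one]
    push_cast
    ring


open MeasureTheory Complex Set Filter Topology in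
theorem RL_rep_ball (ρ : ℝ) (h0 : 0 < ρ) (h1 : ρ ≤ 1) (z : ℂ) (hz : ‖z‖ < 1) :
    ∫ y : ℝ, RLk y * RLSS ρ (RLs y ^ (ρ:ℂ)) z = 2 * Real.pi * mittagLeffler2 ρ z := by
  have hser : ∀ y, HasSum (fun k : ℕ => RLk y * (RLP (ρ * k + ρ) * (z ^ k / (RLs y ^ (ρ:ℂ)) ^ (k + 1))))
      (RLk y * RLSS ρ (RLs y ^ (ρ:ℂ)) z) := fun y =>
    (RL_series ρ _ z (lt_of_lt_of_le hz (RL_unorm ρ h0.le y))).mul_left _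
  have hne : ∀ y, RLs y ^ (ρ:ℂ) ≠ 0 := fun y => norm_pos_iff.mp (lt_of_lt_of_le one_pos (RL_unorm ρ h0.le y))
  have hterm : ∀ (k : ℕ) y, ‖RLP (ρ * k + ρ) * (z ^ k / (RLs y ^ (ρ:ℂ)) ^ (k + 1))‖ ≤ ‖RLP (ρ * k + ρ)‖ * ‖z‖ ^ k := by
    intro k y
    rw [norm_mul, norm_div, norm_pow, norm_pow]
    have : 1 ≤ ‖RLs y ^ (ρ:ℂ)‖ ^ (k + 1) := one_le_pow₀ (RL_unorm ρ h0.le y)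
    gcongr
    exact div_le_self (by positivity) this
  have hInt : ∀ k : ℕ, Integrable (fun y => RLk y * (RLP (ρ * k + ρ) * (z ^ k / (RLs y ^ (ρ:ℂ)) ^ (k + 1)))) := by
    intro k
    refine RLk_integrable_mul _ (Continuous.aestronglyMeasurable ?_) _ (hterm k)
    exact continuous_const.mul (continuous_const.div ((RLs_cpow_cont _).pow _) fun y => pow_ne_zero _ (hne y))
  have hPsum : Summable (fun k : ℕ => ‖RLP (ρ * k + ρ)‖ * ‖z‖ ^ k) := by
    have := (RL_series (ρ:ℂ) 1 z (by simpa using hz)).summable.norm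
    refine this.congr fun k => ?_
    simp
  have hsum : Summable (fun k : ℕ => ∫ y, ‖RLk y * (RLP (ρ * k + ρ) * (z ^ k / (RLs y ^ (ρ:ℂ)) ^ (k + 1)))‖) := by
    refine Summable.of_nonneg_of_le (fun k => integral_nonneg fun y => norm_nonneg _) (fun k => ?_)
      (hPsum.mul_left (∫ y : ℝ, Real.exp 1 * (1 + y ^ 2)⁻¹))
    rw [← integral_mul_const]
    refine integral_mono (hInt k).norm ((integrable_inv_one_add_sq.const_mul (Real.exp 1)).mul_const _) fun y => ?_
    simp only
    rw [norm_mul]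
    exact mul_le_mul (RLk_norm_le y) (hterm k y) (norm_nonneg _) (by positivity)
  have hS := hasSum_integral_of_summable_integral_norm hInt hsum
  have h2 : (fun y => ∑' k : ℕ, RLk y * (RLP (ρ * k + ρ) * (z ^ k / (RLs y ^ (ρ:ℂ)) ^ (k + 1)))) =
      fun y => RLk y * RLSS ρ (RLs y ^ (ρ:ℂ)) z := by
    ext y; exact (hser y).tsum_eq
  rw [h2] at hS
  rw [← hS.tsum_eq, mittagLeffler2, ← tsum_mul_left]
  congr 1
  ext k
  have hx : 0 < ρ * k + ρ := by positivity
  have hH := RL_hankel (ρ * k + ρ + 4) (by linarith)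
  have hP := RL_P_gamma _ hx
  have hcast : (((ρ * k + ρ : ℝ)) : ℂ) = ρ * k + ρ := by push_cast; rfl
  rw [hcast] at hP
  have h3 : ∀ y, RLk y * (RLP (ρ * k + ρ) * (z ^ k / (RLs y ^ (ρ:ℂ)) ^ (k + 1))) =
      (RLP (ρ * k + ρ) * z ^ k) * (cexp (RLs y) * RLs y ^ (-((ρ * k + ρ + 4 : ℝ) : ℂ))) := by
    intro y
    have h4 : RLs y ^ (-((ρ * k + ρ + 4 : ℝ) : ℂ)) = (RLs y ^ 4)⁻¹ * ((RLs y ^ (ρ:ℂ)) ^ (k + 1))⁻¹ := by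
      rw [cpow_neg, ← mul_inv]
      congr 1
      have : ((ρ * k + ρ + 4 : ℝ) : ℂ) = ((4:ℕ):ℂ) + ρ * ((k + 1 : ℕ) : ℂ) := by push_cast; ring
      rw [this, cpow_add _ _ (RLs_ne y), cpow_natCast, cpow_mul_nat]
    rw [h4, RLk]
    ring
  simp_rw [h3]
  rw [integral_const_mul, hH]
  rw [div_eq_mul_inv, div_eq_mul_inv, ← one_div (Complex.Gamma (ρ * k + ρ)), ← hP]
  ring

open MeasureTheory Complex Set Filter Topology in
theorem RL_rep (ρ : ℝ) (h0 : 0 < ρ) (h1 : ρ ≤ 1) (z : ℂ) (hz : z.re < 0) :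
    ∫ y : ℝ, RLk y * RLSS ρ (RLs y ^ (ρ:ℂ)) z = 2 * Real.pi * mittagLeffler2 ρ z := by
  have hA := (RL_int_diff ρ h0.le h1).analyticOnNhd RLU_open
  have hB : AnalyticOnNhd ℂ (fun z => 2 * Real.pi * mittagLeffler2 ρ z) RLU :=
    ((RL_ML_diff ρ h0).const_mul _).differentiableOn.analyticOnNhd RLU_open
  refine hA.eqOn_of_preconnected_of_eventuallyEq hB RLU_preconn (z₀ := 0) (Or.inr (by simp)) ?_ (Or.inl hz)
  filter_upwards [Metric.ball_mem_nhds (0:ℂ) one_pos] with x hx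
  exact RL_rep_ball ρ h0 h1 x (by simpa using hx)


noncomputable def RLA (r q : ℂ) : ℂ :=
  RLc1 r * (q * (q + 1)) - RLc2 r * q ^ 3 + RLc3 r * (q ^ 3 * (q - 1)) - RLc4 r * (q ^ 3 * (q - 1) ^ 2)

noncomputable def RLD2 (r q : ℂ) : ℂ :=
  (6 - 22 * r + 18 * r ^ 2 - 4 * r ^ 3) * (q * (q + 1)) - (44 * r - 108 * r ^ 2 + 56 * r ^ 3) * q ^ 3
  + (108 * r ^ 2 - 144 * r ^ 3) * (q ^ 3 * (q - 1)) - (96 * r ^ 3) * (q ^ 3 * (q - 1) ^ 2)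

noncomputable def RLD1 (r q : ℂ) : ℂ :=
  2 * RLA r q + (q * (q - 1)) * (RLc1 r * (2 * q + 1) - RLc2 r * (3 * q ^ 2) + RLc3 r * (4 * q ^ 3 - 3 * q ^ 2)
    - RLc4 r * (3 * q ^ 2 * (q - 1) ^ 2 + 2 * q ^ 3 * (q - 1)))

theorem RL_SS_decomp (r u z : ℂ) (hz : z ≠ 0) (huz : u - z ≠ 0) :
    RLSS r u z = z⁻¹ * (RLc1 r * (u / z)) + z⁻¹ * ((u / z) ^ 2 * RLA r (1 - u / z)⁻¹) := by
  have h1 : 1 - u / z = -(u - z) / z := by field_simp; ring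
  have h2 : (1 - u / z)⁻¹ = - z / (u - z) := by
    rw [h1, inv_div, div_neg, neg_div]
  rw [h2, RLSS, RLA]
  generalize RLc1 r = a
  generalize RLc2 r = b
  generalize RLc3 r = c
  generalize RLc4 r = d
  field_simp
  ring

open Set in
theorem RL_poly_bound (Q : ℝ) : ∃ C : ℝ, 0 < C ∧ ∀ ρ ∈ Icc (0:ℝ) 1, ∀ q : ℂ, ‖q‖ ≤ Q →
    ‖RLA ρ q‖ ≤ C ∧ ‖RLD1 ρ q‖ ≤ C ∧ ‖RLD2 ρ q‖ ≤ C := by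
  have hc : IsCompact (Icc (0:ℝ) 1 ×ˢ Metric.closedBall (0:ℂ) Q) :=
    isCompact_Icc.prod (isCompact_closedBall _ _)
  have hA : Continuous (fun p : ℝ × ℂ => RLA p.1 p.2) := by
    unfold RLA RLc1 RLc2 RLc3 RLc4; fun_prop
  have hD1 : Continuous (fun p : ℝ × ℂ => RLD1 p.1 p.2) := by
    unfold RLD1 RLA RLc1 RLc2 RLc3 RLc4; fun_prop
  have hD2 : Continuous (fun p : ℝ × ℂ => RLD2 p.1 p.2) := by
    unfold RLD2; fun_prop
  obtain ⟨C1, h1⟩ := hc.exists_bound_of_continuousOn hA.continuousOn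
  obtain ⟨C2, h2⟩ := hc.exists_bound_of_continuousOn hD1.continuousOn
  obtain ⟨C3, h3⟩ := hc.exists_bound_of_continuousOn hD2.continuousOn
  refine ⟨max 1 (max C1 (max C2 C3)), by positivity, fun ρ hρ q hq => ?_⟩
  have hm : ((ρ, q) : ℝ × ℂ) ∈ Icc (0:ℝ) 1 ×ˢ Metric.closedBall (0:ℂ) Q :=
    ⟨hρ, by simpa using hq⟩
  refine ⟨(h1 _ hm).trans ?_, (h2 _ hm).trans ?_, (h3 _ hm).trans ?_⟩ <;> simp

/-- `v = λ⁻¹ (s/t)^ρ` -/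
noncomputable def RLv (lam : ℂ) (t ρ y : ℝ) : ℂ :=
  lam⁻¹ * Complex.exp (ρ * (Complex.log (RLs y) - (Real.log t : ℝ)))

noncomputable def RLr (lam : ℂ) (t ρ y : ℝ) : ℂ :=
  RLv lam t ρ y ^ 2 * RLA ρ (1 - RLv lam t ρ y)⁻¹

theorem RLv_eq (lam : ℂ) (t ρ y : ℝ) (ht : 0 < t) :
    RLv lam t ρ y = RLs y ^ (ρ:ℂ) / (lam * ((t ^ ρ : ℝ) : ℂ)) := by
  rw [RLv, Complex.cpow_def_of_ne_zero (RLs_ne y), Real.rpow_def_of_pos ht, mul_sub, Complex.exp_sub]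
  push_cast
  rw [mul_comm (Complex.log (RLs y)), mul_comm (Complex.ofReal (Real.log t))]
  field_simp

theorem RLv_norm (lam : ℂ) (t ρ y : ℝ) (ht : 0 < t) :
    ‖RLv lam t ρ y‖ = ‖lam‖⁻¹ * (‖RLs y‖ ^ ρ * t ^ (-ρ)) := by
  rw [RLv_eq _ _ _ _ ht, norm_div, Complex.norm_cpow_real, norm_mul, Complex.norm_real,
    Real.norm_of_nonneg (by positivity), Real.rpow_neg ht.le, div_eq_mul_inv, mul_inv]
  ring

theorem RL_gapz (lam : ℂ) (hl : lam.re < 0) (t ρ y : ℝ) (ht : 0 < t) (h0 : 0 ≤ ρ) (h1 : ρ ≤ 1) :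
    -lam.re * t ^ ρ ≤ ‖RLs y ^ (ρ:ℂ) - lam * ((t ^ ρ : ℝ) : ℂ)‖ := by
  have := RL_gap ρ h0 h1 y
  have h2 := Complex.re_le_norm (RLs y ^ (ρ:ℂ) - lam * ((t ^ ρ : ℝ) : ℂ))
  rw [Complex.sub_re, Complex.re_mul_ofReal] at h2
  linarith

theorem RL_lam_ne (lam : ℂ) (hl : lam.re < 0) : lam ≠ 0 := by
  rintro rfl
  simp at hl

theorem RLv_gap (lam : ℂ) (hl : lam.re < 0) (t ρ y : ℝ) (ht : 0 < t) (h0 : 0 ≤ ρ) (h1 : ρ ≤ 1) :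
    1 - RLv lam t ρ y ≠ 0 ∧ ‖(1 - RLv lam t ρ y)⁻¹‖ ≤ ‖lam‖ / (-lam.re) := by
  have hg := RL_gapz lam hl t ρ y ht h0 h1
  have hlam := RL_lam_ne lam hl
  have htρ : 0 < t ^ ρ := by positivity
  have hz : lam * ((t ^ ρ : ℝ) : ℂ) ≠ 0 := mul_ne_zero hlam (by exact_mod_cast htρ.ne')
  have hpos : 0 < -lam.re * t ^ ρ := mul_pos (by linarith) htρ
  have hne : RLs y ^ (ρ:ℂ) - lam * ((t ^ ρ : ℝ) : ℂ) ≠ 0 := norm_pos_iff.mp (lt_of_lt_of_le hpos hg)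
  have h3 : 1 - RLv lam t ρ y = -(RLs y ^ (ρ:ℂ) - lam * ((t ^ ρ : ℝ) : ℂ)) / (lam * ((t ^ ρ : ℝ) : ℂ)) := by
    rw [RLv_eq _ _ _ _ ht, eq_div_iff hz, sub_mul, div_mul_cancel₀ _ hz]; ring
  rw [h3]
  refine ⟨div_ne_zero (neg_ne_zero.mpr hne) hz, ?_⟩
  rw [inv_div, norm_div, norm_neg, norm_mul, Complex.norm_real, Real.norm_of_nonneg htρ.le]
  calc ‖lam‖ * t ^ ρ / ‖RLs y ^ (ρ:ℂ) - lam * ((t ^ ρ : ℝ) : ℂ)‖ ≤ ‖lam‖ * t ^ ρ / (-lam.re * t ^ ρ) := by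
        gcongr
    _ = _ := by
        have : -lam.re ≠ 0 := by linarith
        field_simp

theorem RLr_deriv (lam : ℂ) (hl : lam.re < 0) (t ρ y : ℝ) (ht : 0 < t) (h0 : 0 ≤ ρ) (h1 : ρ ≤ 1) :
    HasDerivAt (fun ρ => RLr lam t ρ y) (RLv lam t ρ y ^ 2 *
      ((Complex.log (RLs y) - (Real.log t : ℝ)) * RLD1 ρ (1 - RLv lam t ρ y)⁻¹
        + RLD2 ρ (1 - RLv lam t ρ y)⁻¹)) ρ := by
  set L := Complex.log (RLs y) - (Real.log t : ℝ) with hL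
  have hne := (RLv_gap lam hl t ρ y ht h0 h1).1
  have hid : HasDerivAt (fun ρ : ℝ => (ρ : ℂ)) 1 ρ := Complex.ofRealCLM.hasDerivAt
  have hv : HasDerivAt (fun ρ => RLv lam t ρ y) (RLv lam t ρ y * L) ρ := by
    have := ((hid.mul_const L).cexp).const_mul lam⁻¹
    refine this.congr_deriv ?_
    rw [RLv]; ring
  have hq : HasDerivAt (fun ρ => (1 - RLv lam t ρ y)⁻¹)
      ((1 - RLv lam t ρ y)⁻¹ * ((1 - RLv lam t ρ y)⁻¹ - 1) * L) ρ := by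
    have := ((hasDerivAt_const ρ (1:ℂ)).sub hv).inv (by simpa using hne)
    refine this.congr_deriv ?_
    simp only [Pi.sub_apply]
    field_simp
    ring
  unfold RLr RLA RLc1 RLc2 RLc3 RLc4
  generalize hqq : (1 - RLv lam t ρ y)⁻¹ = q at *
  have e1 := (((hid.const_mul 6).sub ((hid.pow 2).const_mul 11)).add ((hid.pow 3).const_mul 6)).sub (hid.pow 4)
  have e2 := (((hid.pow 2).const_mul 22).sub ((hid.pow 3).const_mul 36)).add ((hid.pow 4).const_mul 14)
  have e3 := ((hid.pow 3).const_mul 36).sub ((hid.pow 4).const_mul 36)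
  have e4 := ((hid.pow 4).const_mul 24)
  have b1 := hq.mul (hq.add_const 1)
  have b2 := hq.pow 3
  have b3 := (hq.pow 3).mul (hq.sub_const 1)
  have b4 := (hq.pow 3).mul ((hq.sub_const 1).pow 2)
  have := (hv.pow 2).mul ((((e1.mul b1).sub (e2.mul b2)).add (e3.mul b3)).sub (e4.mul b4))
  refine this.congr_deriv ?_
  simp only [Pi.add_apply, Pi.pow_apply, Pi.sub_apply, Pi.mul_apply, hqq, RLD1, RLD2, RLA, RLc1, RLc2, RLc3, RLc4]
  push_cast
  ring


open MeasureTheory in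
theorem RL_weight_integrable : Integrable (fun y : ℝ => (1 + ‖y‖ ^ 2) ^ (-(3/2 : ℝ) / 2)) :=
  integrable_rpow_neg_one_add_norm_sq (by simp; norm_num)

theorem RL_weight (y : ℝ) : ‖RLk y‖ * (‖RLs y‖ ^ 2 * (1 + ‖Complex.log (RLs y)‖)) ≤
    (7 * Real.exp 1) * (1 + ‖y‖ ^ 2) ^ (-(3/2 : ℝ) / 2) := by
  have hs := RLs_norm_ge y
  have hlog : ‖Complex.log (RLs y)‖ ≤ Real.log ‖RLs y‖ + Real.pi := by
    have h1 := Complex.norm_le_abs_re_add_abs_im (Complex.log (RLs y))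
    rw [Complex.log_re, Complex.log_im, abs_of_nonneg (Real.log_nonneg hs)] at h1
    linarith [Complex.abs_arg_le_pi (RLs y)]
  have hl2 : Real.log ‖RLs y‖ ≤ 2 * ‖RLs y‖ ^ (1/2 : ℝ) := by
    have := Real.log_le_rpow_div (norm_nonneg (RLs y)) (show (0:ℝ) < 1/2 by norm_num)
    linarith
  have h1 : 1 ≤ ‖RLs y‖ ^ (1/2 : ℝ) := Real.one_le_rpow hs (by norm_num)
  have hb : 1 + ‖Complex.log (RLs y)‖ ≤ 7 * ‖RLs y‖ ^ (1/2 : ℝ) := by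
    linarith [Real.pi_le_four]
  have hbase : (0:ℝ) < 1 + y ^ 2 := by positivity
  have hsq : ‖RLs y‖ ^ (1/2 : ℝ) = (1 + y ^ 2) ^ (1/4 : ℝ) := by
    rw [← RLs_norm_sq, ← Real.rpow_natCast, ← Real.rpow_mul (norm_nonneg _)]
    norm_num
  have hw : (1 + ‖y‖ ^ 2) ^ (-(3/2 : ℝ) / 2) = (1 + y ^ 2)⁻¹ * (1 + y ^ 2) ^ (1/4 : ℝ) := by
    rw [Real.norm_eq_abs, sq_abs, ← Real.rpow_neg_one (1 + y ^ 2), ← Real.rpow_add hbase]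
    norm_num
  rw [hw, ← hsq, RLk_norm, RLs_norm_sq]
  calc Real.exp 1 * ((1 + y ^ 2) ^ 2)⁻¹ * ((1 + y ^ 2) * (1 + ‖Complex.log (RLs y)‖))
      ≤ Real.exp 1 * ((1 + y ^ 2) ^ 2)⁻¹ * ((1 + y ^ 2) * (7 * ‖RLs y‖ ^ (1/2 : ℝ))) := by gcongr
    _ = _ := by field_simp

theorem RLv_sq_le (lam : ℂ) (t ρ₁ ρ y : ℝ) (ht : 1 ≤ t) (h1 : ρ ≤ 1) (h2 : ρ₁ ≤ ρ) :
    ‖RLv lam t ρ y‖ ^ 2 ≤ (‖lam‖⁻¹) ^ 2 * (‖RLs y‖ ^ 2 * t ^ (-2 * ρ₁)) := by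
  have ht0 : 0 < t := by linarith
  rw [RLv_norm _ _ _ _ ht0, mul_pow, mul_pow]
  have e1 : (t ^ (-ρ)) ^ 2 = t ^ (-2 * ρ) := by
    rw [← Real.rpow_natCast, ← Real.rpow_mul ht0.le]; congr 1; push_cast; ring
  rw [e1]
  have e2 : ‖RLs y‖ ^ ρ ≤ ‖RLs y‖ := by
    have := Real.rpow_le_rpow_of_exponent_le (RLs_norm_ge y) h1
    rwa [Real.rpow_one] at this
  have e3 : t ^ (-2 * ρ) ≤ t ^ (-2 * ρ₁) := Real.rpow_le_rpow_of_exponent_le ht (by linarith)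
  gcongr

open MeasureTheory Set Filter Topology in
theorem RL_rem (lam : ℂ) (hl : lam.re < 0) : ∃ C : ℝ, 0 < C ∧ ∀ t : ℝ, 1 ≤ t →
    (∀ ρ ∈ Icc (0:ℝ) 1, Integrable (fun y => RLk y * RLr lam t ρ y)) ∧
    ∀ ρ₁ ∈ Icc (0:ℝ) 1, ∀ ρ₂ ∈ Icc (0:ℝ) 1, ρ₁ ≤ ρ₂ →
      ‖(∫ y, RLk y * RLr lam t ρ₂ y) - ∫ y, RLk y * RLr lam t ρ₁ y‖ ≤
        C * (t ^ (-2 * ρ₁) * (1 + Real.log t) * (ρ₂ - ρ₁)) := by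
  obtain ⟨C, hC0, hC⟩ := RL_poly_bound (‖lam‖ / (-lam.re))
  have hlam := RL_lam_ne lam hl
  have hlp : 0 < ‖lam‖⁻¹ := by positivity
  set W : ℝ → ℝ := fun y => (1 + ‖y‖ ^ 2) ^ (-(3/2 : ℝ) / 2) with hW
  have hWI : Integrable W := RL_weight_integrable
  have hW0 : ∀ y, 0 ≤ W y := fun y => by rw [hW]; positivity
  have hIW0 : 0 ≤ ∫ y, W y := integral_nonneg hW0
  refine ⟨(C * (‖lam‖⁻¹) ^ 2 * (7 * Real.exp 1)) * (∫ y, W y) + 1, by positivity, fun t ht => ?_⟩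
  have ht0 : 0 < t := by linarith
  have hlogt : 0 ≤ Real.log t := Real.log_nonneg ht
  have hvm : ∀ ρ, Measurable (fun y => RLv lam t ρ y) := by
    intro ρ
    have : Measurable RLs := RLs_cont.measurable
    unfold RLv
    fun_prop
  have hInt : ∀ ρ ∈ Icc (0:ℝ) 1, Integrable (fun y => RLk y * RLr lam t ρ y) := by
    intro ρ hρ
    refine (hWI.const_mul ((C * (‖lam‖⁻¹) ^ 2 * (7 * Real.exp 1)) * t ^ (-2 * ρ))).mono' ?_
      (Eventually.of_forall fun y => ?_)
    · refine RLk_cont.aestronglyMeasurable.mul (Measurable.aestronglyMeasurable ?_)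
      have := hvm ρ
      unfold RLr RLA
      fun_prop
    · have h1 := (hC ρ hρ _ (RLv_gap lam hl t ρ y ht0 hρ.1 hρ.2).2).1
      have h2 := RLv_sq_le lam t ρ ρ y ht hρ.2 le_rfl
      have h3 := RL_weight y
      rw [RLr, norm_mul, norm_mul, norm_pow]
      calc ‖RLk y‖ * (‖RLv lam t ρ y‖ ^ 2 * ‖RLA ρ (1 - RLv lam t ρ y)⁻¹‖)
          ≤ ‖RLk y‖ * (((‖lam‖⁻¹) ^ 2 * (‖RLs y‖ ^ 2 * t ^ (-2 * ρ))) * C) := by gcongr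
        _ = (C * (‖lam‖⁻¹) ^ 2 * t ^ (-2 * ρ)) * (‖RLk y‖ * (‖RLs y‖ ^ 2 * 1)) := by ring
        _ ≤ (C * (‖lam‖⁻¹) ^ 2 * t ^ (-2 * ρ)) * (‖RLk y‖ * (‖RLs y‖ ^ 2 * (1 + ‖Complex.log (RLs y)‖))) := by
            gcongr
            linarith [norm_nonneg (Complex.log (RLs y))]
        _ ≤ (C * (‖lam‖⁻¹) ^ 2 * t ^ (-2 * ρ)) * ((7 * Real.exp 1) * W y) := by gcongr
        _ = _ := by ring
  refine ⟨hInt, fun ρ₁ h1 ρ₂ h2 h12 => ?_⟩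
  have hlip : ∀ y, ‖RLr lam t ρ₂ y - RLr lam t ρ₁ y‖ ≤
      ((‖lam‖⁻¹) ^ 2 * (‖RLs y‖ ^ 2 * t ^ (-2 * ρ₁))) * (((1 + ‖Complex.log (RLs y)‖) * (1 + Real.log t)) * C)
        * ‖ρ₂ - ρ₁‖ := by
    intro y
    refine Convex.norm_image_sub_le_of_norm_hasDerivWithin_le (s := Icc ρ₁ ρ₂)
      (f := fun ρ => RLr lam t ρ y) (fun ρ hρ => (RLr_deriv lam hl t ρ y ht0 (h1.1.trans hρ.1)
        (hρ.2.trans h2.2)).hasDerivWithinAt) (fun ρ hρ => ?_) (convex_Icc _ _) (left_mem_Icc.mpr h12)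
        (right_mem_Icc.mpr h12)
    have h01 : ρ ∈ Icc (0:ℝ) 1 := ⟨h1.1.trans hρ.1, hρ.2.trans h2.2⟩
    obtain ⟨-, hD1, hD2⟩ := hC ρ h01 _ (RLv_gap lam hl t ρ y ht0 h01.1 h01.2).2
    have hv := RLv_sq_le lam t ρ₁ ρ y ht h01.2 hρ.1
    rw [norm_mul, norm_pow]
    refine mul_le_mul hv ?_ (norm_nonneg _) (by positivity)
    have hLn : ‖Complex.log (RLs y) - (Real.log t : ℝ)‖ ≤ ‖Complex.log (RLs y)‖ + Real.log t := by
      refine (norm_sub_le _ _).trans ?_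
      rw [Complex.norm_real, Real.norm_of_nonneg hlogt]
    have hn := norm_nonneg (Complex.log (RLs y))
    calc _ ≤ ‖Complex.log (RLs y) - (Real.log t : ℝ)‖ * ‖RLD1 ρ (1 - RLv lam t ρ y)⁻¹‖
          + ‖RLD2 ρ (1 - RLv lam t ρ y)⁻¹‖ := by
          refine (norm_add_le _ _).trans ?_
          rw [norm_mul]
      _ ≤ (‖Complex.log (RLs y)‖ + Real.log t) * C + C := by gcongr
      _ ≤ _ := by
          have := mul_nonneg (mul_nonneg hn hlogt) hC0.le
          nlinarith
  rw [← integral_sub (hInt ρ₂ h2) (hInt ρ₁ h1)]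
  have hd : 0 ≤ ρ₂ - ρ₁ := by linarith
  have hE : 0 ≤ t ^ (-2 * ρ₁) * (1 + Real.log t) * (ρ₂ - ρ₁) := by positivity
  calc ‖∫ y, (RLk y * RLr lam t ρ₂ y - RLk y * RLr lam t ρ₁ y)‖
      ≤ ∫ y, ((C * (‖lam‖⁻¹) ^ 2 * (7 * Real.exp 1)) * (t ^ (-2 * ρ₁) * (1 + Real.log t) * (ρ₂ - ρ₁))) * W y := by
        refine norm_integral_le_of_norm_le (hWI.const_mul _) (Eventually.of_forall fun y => ?_)
        rw [← mul_sub, norm_mul]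
        have h3 := RL_weight y
        have h4 := hlip y
        rw [Real.norm_of_nonneg hd] at h4
        calc ‖RLk y‖ * ‖RLr lam t ρ₂ y - RLr lam t ρ₁ y‖ ≤ ‖RLk y‖ * _ := mul_le_mul_of_nonneg_left h4 (norm_nonneg _)
          _ = (C * (‖lam‖⁻¹) ^ 2 * (t ^ (-2 * ρ₁) * (1 + Real.log t) * (ρ₂ - ρ₁))) *
              (‖RLk y‖ * (‖RLs y‖ ^ 2 * (1 + ‖Complex.log (RLs y)‖))) := by ring
          _ ≤ (C * (‖lam‖⁻¹) ^ 2 * (t ^ (-2 * ρ₁) * (1 + Real.log t) * (ρ₂ - ρ₁))) *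
              ((7 * Real.exp 1) * W y) := by gcongr
          _ = _ := by ring
    _ = (C * (‖lam‖⁻¹) ^ 2 * (7 * Real.exp 1)) * (∫ y, W y) * (t ^ (-2 * ρ₁) * (1 + Real.log t) * (ρ₂ - ρ₁)) := by
        rw [integral_const_mul]; ring
    _ ≤ _ := by
        gcongr
        linarith

theorem RL_c1_gamma (ρ : ℝ) (h1 : ρ ≤ 1) :
    RLc1 ρ / Complex.Gamma ((4 - ρ : ℝ) : ℂ) = ((ρ * (1 - ρ) / Real.Gamma (2 - ρ) : ℝ) : ℂ) := by
  have e2 : 2 - ρ ≠ 0 := by linarith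
  have e3 : 3 - ρ ≠ 0 := by linarith
  have hG : Real.Gamma (2 - ρ) ≠ 0 := (Real.Gamma_pos_of_pos (by linarith)).ne'
  have hval : Real.Gamma (4 - ρ) = (3 - ρ) * ((2 - ρ) * Real.Gamma (2 - ρ)) := by
    rw [← Real.Gamma_add_one e2, show 2 - ρ + 1 = 3 - ρ by ring, ← Real.Gamma_add_one e3]
    congr 1; ring
  rw [Complex.Gamma_ofReal, hval]
  have : RLc1 ρ = ((ρ * (1 - ρ) * (2 - ρ) * (3 - ρ) : ℝ) : ℂ) := by
    rw [RLc1]; push_cast; ring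
  rw [this]
  norm_cast
  field_simp

open MeasureTheory Set in
theorem RL_main (lam : ℂ) (hl : lam.re < 0) (t ρ : ℝ) (ht : 1 ≤ t) (h0 : 0 < ρ) (h1 : ρ ≤ 1)
    (hI : Integrable (fun y => RLk y * RLr lam t ρ y)) :
    (((t ^ (ρ - 1) : ℝ) : ℂ) * mittagLeffler2 ρ (lam * ((t ^ ρ : ℝ) : ℂ))) * (lam ^ 2 * t) =
      ((t ^ (-ρ) * (ρ * (1 - ρ) / Real.Gamma (2 - ρ)) : ℝ) : ℂ) +
        lam / (2 * Real.pi) * ∫ y, RLk y * RLr lam t ρ y := by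
  have ht0 : 0 < t := by linarith
  have hlam := RL_lam_ne lam hl
  have htρ : 0 < t ^ ρ := by positivity
  have htc : ((t ^ ρ : ℝ) : ℂ) ≠ 0 := by exact_mod_cast htρ.ne'
  have hz : lam * ((t ^ ρ : ℝ) : ℂ) ≠ 0 := mul_ne_zero hlam htc
  have hre : (lam * ((t ^ ρ : ℝ) : ℂ)).re < 0 := by
    rw [Complex.re_mul_ofReal]; exact mul_neg_of_neg_of_pos hl htρ
  have hrep := RL_rep ρ h0 h1 _ hre
  have hne : ∀ y, RLs y ^ (ρ:ℂ) - lam * ((t ^ ρ : ℝ) : ℂ) ≠ 0 := fun y => norm_pos_iff.mp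
    (lt_of_lt_of_le (mul_pos (by linarith) htρ) (RL_gapz lam hl t ρ y ht0 h0.le h1))
  have hH := RL_hankel (4 - ρ) (by linarith)
  have hHI := RL_hankel_integrable (4 - ρ) (by linarith)
  have hpow : ∀ y, RLk y * RLs y ^ (ρ:ℂ) = Complex.exp (RLs y) * RLs y ^ (-((4 - ρ : ℝ) : ℂ)) := by
    intro y
    have : (-((4 - ρ : ℝ) : ℂ)) = (ρ:ℂ) - ((4:ℕ):ℂ) := by push_cast; ring
    rw [this, Complex.cpow_sub _ _ (RLs_ne y), Complex.cpow_natCast, RLk]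
    ring
  have hpI : Integrable (fun y => Complex.exp (RLs y) * RLs y ^ (-((4 - ρ : ℝ) : ℂ))) := by
    refine hHI.bdd_mul (c := Real.exp 1) (Continuous.aestronglyMeasurable (by fun_prop)) (Filter.Eventually.of_forall fun y => ?_)
    rw [RLs_exp_norm]
  set z := lam * ((t ^ ρ : ℝ) : ℂ) with hzdef
  have hdec : ∀ y, RLk y * RLSS ρ (RLs y ^ (ρ:ℂ)) z = (z⁻¹ * z⁻¹ * RLc1 ρ) *
      (Complex.exp (RLs y) * RLs y ^ (-((4 - ρ : ℝ) : ℂ))) + z⁻¹ * (RLk y * RLr lam t ρ y) := by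
    intro y
    rw [RL_SS_decomp _ _ _ hz (hne y), ← hpow, RLr, RLv_eq _ _ _ _ ht0]
    ring
  simp_rw [hdec] at hrep
  rw [integral_add (hpI.const_mul _) (hI.const_mul _), integral_const_mul, integral_const_mul, hH] at hrep
  have hpi : (2 * Real.pi : ℂ) ≠ 0 := by
    exact_mod_cast (by positivity : (2 * Real.pi : ℝ) ≠ 0)
  have hML : mittagLeffler2 ρ z = z⁻¹ * z⁻¹ * (RLc1 ρ / Complex.Gamma ((4 - ρ : ℝ) : ℂ)) +
      z⁻¹ / (2 * Real.pi) * ∫ y, RLk y * RLr lam t ρ y := by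
    apply mul_left_cancel₀ hpi
    rw [← hrep]
    field_simp
  rw [hML, RL_c1_gamma ρ h1]
  have e1 : ((t ^ (ρ - 1) : ℝ) : ℂ) * t = ((t ^ ρ : ℝ) : ℂ) := by
    rw [← Complex.ofReal_mul, ← Real.rpow_add_one ht0.ne']; congr 2; ring
  have e2 : ((t ^ (-ρ) : ℝ) : ℂ) = ((t ^ ρ : ℝ) : ℂ)⁻¹ := by
    rw [Real.rpow_neg ht0.le, Complex.ofReal_inv]
  rw [Complex.ofReal_mul, e2]
  generalize ((ρ * (1 - ρ) / Real.Gamma (2 - ρ) : ℝ) : ℂ) = φ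
  generalize (∫ y, RLk y * RLr lam t ρ y) = J
  generalize ((t ^ ρ : ℝ) : ℂ) = X at *
  generalize ((t ^ (ρ - 1) : ℝ) : ℂ) = Y at *
  rw [hzdef]
  have : ∀ S : ℂ, Y * S * (lam ^ 2 * t) = X * lam ^ 2 * S := by
    intro S; rw [← e1]; ring
  rw [this]
  field_simp


theorem RL_psi (β₀ : ℝ) (h0 : 0 < β₀) (h1 : β₀ < 1) :
    ∃ c K : ℝ, 0 < c ∧ 0 ≤ K ∧
      (∀ ρ ∈ Set.Icc β₀ 1, c ≤ ρ / Real.Gamma (2 - ρ)) ∧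
      ∀ ρ₁ ∈ Set.Icc β₀ 1, ∀ ρ₂ ∈ Set.Icc β₀ 1, ρ₁ ≤ ρ₂ →
        ρ₂ / Real.Gamma (2 - ρ₂) ≤ ρ₁ / Real.Gamma (2 - ρ₁) + K * (ρ₂ - ρ₁) := by
  have hF : Differentiable ℂ (fun z : ℂ => z * (Complex.Gamma (2 - z))⁻¹) := by
    have := Complex.differentiable_one_div_Gamma
    exact differentiable_id.mul (this.comp (differentiable_const (2 : ℂ) |>.sub differentiable_id))
  have hF' : ContDiff ℝ 1 (fun x : ℝ => (x : ℂ) * (Complex.Gamma (2 - x))⁻¹) := by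
    have h : ContDiff ℝ 1 (fun z : ℂ => z * (Complex.Gamma (2 - z))⁻¹) :=
      (hF.contDiff (n := 1)).restrict_scalars ℝ
    exact h.comp Complex.ofRealCLM.contDiff
  have hre : ∀ x : ℝ, ((x / Real.Gamma (2 - x) : ℝ) : ℂ)
      = (x : ℂ) * (Complex.Gamma (2 - x))⁻¹ := by
    intro x
    have : Complex.Gamma (2 - x) = ((Real.Gamma (2 - x) : ℝ) : ℂ) := by
      rw [← Complex.Gamma_ofReal]; push_cast; rfl
    rw [this]; push_cast; rfl
  have hψ : ContDiff ℝ 1 (fun x : ℝ => x / Real.Gamma (2 - x)) := by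
    have h : ContDiff ℝ 1 (fun x : ℝ => ((x : ℂ) * (Complex.Gamma (2 - x))⁻¹).re) :=
      Complex.reCLM.contDiff.comp hF'
    convert h using 2 with x
    rw [← hre, Complex.ofReal_re]
  obtain ⟨x₀, hx₀, hmin⟩ := isCompact_Icc.exists_isMinOn (Set.nonempty_Icc.2 h1.le)
    (hψ.continuous.continuousOn (s := Set.Icc β₀ 1))
  obtain ⟨x₁, hx₁, hmax⟩ := isCompact_Icc.exists_isMaxOn (Set.nonempty_Icc.2 h1.le)
    ((hψ.continuous_deriv le_rfl).norm.continuousOn (s := Set.Icc β₀ 1))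
  refine ⟨_, ‖deriv (fun x : ℝ => x / Real.Gamma (2 - x)) x₁‖, ?_, norm_nonneg _,
    fun ρ hρ => hmin hρ, ?_⟩
  · exact div_pos (h0.trans_le hx₀.1) (Real.Gamma_pos_of_pos (by linarith [hx₀.2]))
  · intro ρ₁ hρ₁ ρ₂ hρ₂ h12
    have := (convex_Icc β₀ 1).norm_image_sub_le_of_norm_deriv_le (𝕜 := ℝ)
      (fun x _ => (hψ.differentiable one_ne_zero).differentiableAt) (fun x hx => hmax hx) hρ₁ hρ₂
    rw [Real.norm_of_nonneg (sub_nonneg.2 h12)] at this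
    have h2 := (Real.le_norm_self _).trans this
    simp only at h2
    linarith

theorem RL_mono (β₀ c K : ℝ) (h0 : 0 < β₀) (hc : 0 < c) (hK : 0 ≤ K)
    (hlow : ∀ ρ ∈ Set.Icc β₀ 1, c ≤ ρ / Real.Gamma (2 - ρ))
    (hlip : ∀ ρ₁ ∈ Set.Icc β₀ 1, ∀ ρ₂ ∈ Set.Icc β₀ 1, ρ₁ ≤ ρ₂ →
        ρ₂ / Real.Gamma (2 - ρ₂) ≤ ρ₁ / Real.Gamma (2 - ρ₁) + K * (ρ₂ - ρ₁))
    (t : ℝ) (ht : 1 ≤ t) (hlog : K / c ≤ Real.log t)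
    (ρ₁ ρ₂ : ℝ) (hρ₁ : ρ₁ ∈ Set.Icc β₀ 1) (hρ₂ : ρ₂ ∈ Set.Icc β₀ 1) (h12 : ρ₁ ≤ ρ₂) :
    c * t ^ (-ρ₁) * (ρ₂ - ρ₁) ≤ t ^ (-ρ₁) * (ρ₁ * (1 - ρ₁) / Real.Gamma (2 - ρ₁))
      - t ^ (-ρ₂) * (ρ₂ * (1 - ρ₂) / Real.Gamma (2 - ρ₂)) := by
  have ht0 : 0 < t := by linarith
  set a := ρ₁ / Real.Gamma (2 - ρ₁) with ha
  set b := ρ₂ / Real.Gamma (2 - ρ₂) with hb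
  have e1 : ρ₁ * (1 - ρ₁) / Real.Gamma (2 - ρ₁) = a * (1 - ρ₁) := by rw [ha]; ring
  have e2 : ρ₂ * (1 - ρ₂) / Real.Gamma (2 - ρ₂) = b * (1 - ρ₂) := by rw [hb]; ring
  rw [e1, e2]
  have hca : c ≤ a := hlow _ hρ₁
  have hba : b ≤ a + K * (ρ₂ - ρ₁) := hlip _ hρ₁ _ hρ₂ h12
  have hδ : 0 ≤ ρ₂ - ρ₁ := sub_nonneg.2 h12
  have hKc : K ≤ Real.log t * c := (div_le_iff₀ hc).1 hlog
  have hlog0 : 0 ≤ Real.log t := Real.log_nonneg ht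
  have hexp : 1 + Real.log t * (ρ₂ - ρ₁) ≤ t ^ (ρ₂ - ρ₁) := by
    rw [Real.rpow_def_of_pos ht0]
    linarith [Real.add_one_le_exp (Real.log t * (ρ₂ - ρ₁))]
  have hb2 : b ≤ a * t ^ (ρ₂ - ρ₁) := by
    have h1 : K * (ρ₂ - ρ₁) ≤ Real.log t * a * (ρ₂ - ρ₁) := by
      apply mul_le_mul_of_nonneg_right _ hδ
      exact hKc.trans (mul_le_mul_of_nonneg_left hca hlog0)
    have h2 := mul_le_mul_of_nonneg_left hexp (hc.le.trans hca)
    nlinarith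
  have ht2 : t ^ (-ρ₁) = t ^ (-ρ₂) * t ^ (ρ₂ - ρ₁) := by
    rw [← Real.rpow_add ht0]; congr 1; ring
  have h3 : t ^ (-ρ₂) * b ≤ t ^ (-ρ₁) * a := by
    rw [ht2, mul_assoc, mul_comm (t ^ (ρ₂ - ρ₁))]
    exact mul_le_mul_of_nonneg_left hb2 (Real.rpow_nonneg ht0.le _)
  have h4 : t ^ (-ρ₂) * b * (1 - ρ₂) ≤ t ^ (-ρ₁) * a * (1 - ρ₂) :=
    mul_le_mul_of_nonneg_right h3 (by linarith [hρ₂.2])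
  have h5 : c * (t ^ (-ρ₁) * (ρ₂ - ρ₁)) ≤ a * (t ^ (-ρ₁) * (ρ₂ - ρ₁)) :=
    mul_le_mul_of_nonneg_right hca (mul_nonneg (Real.rpow_nonneg ht0.le _) hδ)
  nlinarith

theorem RL_decay (β₀ : ℝ) (h0 : 0 < β₀) :
    Filter.Tendsto (fun t : ℝ => t ^ (-β₀) * (1 + Real.log t)) Filter.atTop (nhds 0) := by
  have h1 := tendsto_rpow_neg_atTop h0
  have h2 := (isLittleO_log_rpow_atTop h0).tendsto_div_nhds_zero
  have h3 := h1.add h2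
  rw [add_zero] at h3
  refine h3.congr' ?_
  filter_upwards [Filter.eventually_gt_atTop 0] with t ht
  rw [Real.rpow_neg ht.le]
  ring

theorem RL_inj (lam : ℂ) (hl : lam.re < 0) (β₀ : ℝ) (h0 : 0 < β₀) (h1 : β₀ < 1) :
    ∀ᶠ t : ℝ in Filter.atTop, Set.InjOn (fun ρ : ℝ => ((t ^ (ρ - 1) : ℝ) : ℂ) *
            mittagLeffler2 ρ (lam * ((t ^ ρ : ℝ) : ℂ))) (Set.Icc β₀ 1) := by
  obtain ⟨c, K, hc, hK, hlow, hlip⟩ := RL_psi β₀ h0 h1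
  obtain ⟨C, hC, hrem⟩ := RL_rem lam hl
  have hlam := RL_lam_ne lam hl
  set D := ‖lam / (2 * Real.pi : ℂ)‖ * C with hD
  have hev : ∀ᶠ t : ℝ in Filter.atTop, D * (t ^ (-β₀) * (1 + Real.log t)) < c := by
    have := (RL_decay β₀ h0).const_mul D
    rw [mul_zero] at this
    exact this.eventually (gt_mem_nhds hc)
  filter_upwards [hev, Filter.eventually_ge_atTop 1,
    Real.tendsto_log_atTop.eventually_ge_atTop (K / c)] with t ht ht1 htlog
  have ht0 : 0 < t := by linarith
  obtain ⟨hI, hd⟩ := hrem t ht1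
  have key : ∀ ρ₁ ∈ Set.Icc β₀ 1, ∀ ρ₂ ∈ Set.Icc β₀ 1, ρ₁ < ρ₂ →
      ((t ^ (ρ₁ - 1) : ℝ) : ℂ) * mittagLeffler2 ρ₁ (lam * ((t ^ ρ₁ : ℝ) : ℂ)) =
      ((t ^ (ρ₂ - 1) : ℝ) : ℂ) * mittagLeffler2 ρ₂ (lam * ((t ^ ρ₂ : ℝ) : ℂ)) → False := by
    intro ρ₁ hρ₁ ρ₂ hρ₂ h12 heq
    have i1 : ρ₁ ∈ Set.Icc (0 : ℝ) 1 := ⟨h0.le.trans hρ₁.1, hρ₁.2⟩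
    have i2 : ρ₂ ∈ Set.Icc (0 : ℝ) 1 := ⟨h0.le.trans hρ₂.1, hρ₂.2⟩
    have m1 := RL_main lam hl t ρ₁ ht1 (h0.trans_le hρ₁.1) hρ₁.2 (hI _ i1)
    have m2 := RL_main lam hl t ρ₂ ht1 (h0.trans_le hρ₂.1) hρ₂.2 (hI _ i2)
    rw [heq, m2] at m1
    have hm := RL_mono β₀ c K h0 hc hK hlow hlip t ht1 htlog ρ₁ ρ₂ hρ₁ hρ₂ h12.le
    have hr := hd ρ₁ i1 ρ₂ i2 h12.le
    have e : ((t ^ (-ρ₁) * (ρ₁ * (1 - ρ₁) / Real.Gamma (2 - ρ₁))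
      - t ^ (-ρ₂) * (ρ₂ * (1 - ρ₂) / Real.Gamma (2 - ρ₂)) : ℝ) : ℂ) =
      lam / (2 * Real.pi) * ((∫ y, RLk y * RLr lam t ρ₂ y) - ∫ y, RLk y * RLr lam t ρ₁ y) := by
      rw [Complex.ofReal_sub, mul_sub (lam / (2 * Real.pi : ℂ)), sub_eq_sub_iff_add_eq_add]
      exact m1.symm.trans (add_comm _ _)
    have e2 := congrArg norm e
    rw [norm_mul, Complex.norm_real] at e2
    have e3 := (hm.trans (Real.le_norm_self _)).trans_eq e2
    have e4 := e3.trans (mul_le_mul_of_nonneg_left hr (norm_nonneg _))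
    have hp : 0 < t ^ (-ρ₁) * (ρ₂ - ρ₁) := mul_pos (Real.rpow_pos_of_pos ht0 _) (by linarith)
    have e5 : t ^ (-2 * ρ₁) = t ^ (-ρ₁) * t ^ (-ρ₁) := by
      rw [← Real.rpow_add ht0]; congr 1; ring
    rw [e5] at e4
    have e6 : c * (t ^ (-ρ₁) * (ρ₂ - ρ₁)) ≤
        (D * (t ^ (-ρ₁) * (1 + Real.log t))) * (t ^ (-ρ₁) * (ρ₂ - ρ₁)) := by
      rw [hD]
      calc _ = c * t ^ (-ρ₁) * (ρ₂ - ρ₁) := by ring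
        _ ≤ _ := e4
        _ = _ := by ring
    have e7 := le_of_mul_le_mul_right e6 hp
    have e8 : t ^ (-ρ₁) ≤ t ^ (-β₀) :=
      Real.rpow_le_rpow_of_exponent_le ht1 (by linarith [hρ₁.1])
    have hlog0 : 0 ≤ 1 + Real.log t := by linarith [Real.log_nonneg ht1]
    have hD0 : 0 ≤ D := mul_nonneg (norm_nonneg _) hC.le
    have e9 := mul_le_mul_of_nonneg_left (mul_le_mul_of_nonneg_right e8 hlog0) hD0
    linarith
  intro ρ₁ hρ₁ ρ₂ hρ₂ heq
  simp only at heq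
  rcases lt_trichotomy ρ₁ ρ₂ with h | h | h
  · exact (key _ hρ₁ _ hρ₂ h heq).elim
  · exact h
  · exact (key _ hρ₂ _ hρ₁ h heq.symm).elim


/-- **Theorem (Riemann-Liouville case, reduced inverse problem).** Let `K` be an
invertible `m × m` complex matrix, `Re λ_l < 0` and `|Re λ_l| ≠ |Im λ_l|` for all
`l`, and `0 < β₀ < 1`. Then there is `T₁ > 1` such that for every `t₀ ≥ T₁` and
every data vector `d` whose transformed components `(K⁻¹ d)_l` lie in the range of
`ρ ↦ t₀^{ρ−1} E_{ρ,ρ}(λ_l t₀^ρ)` over `[β₀, 1)`, there is a unique vector-order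
`B ∈ [β₀, 1]^m` with `∑_l K_{j,l} t₀^{B_l−1} E_{B_l,B_l}(λ_l t₀^{B_l}) = d_j`
for all `j`. -/
theorem riemann_liouville_inverse_problem (m : ℕ) (hm : 1 ≤ m)
    (K : Matrix (Fin m) (Fin m) ℂ) (hK : IsUnit K)
    (lam : Fin m → ℂ) (hlam : ∀ l, (lam l).re < 0)
    (hlam' : ∀ l, |(lam l).re| ≠ |(lam l).im|)
    (β₀ : ℝ) (hβ₀ : 0 < β₀) (hβ₀1 : β₀ < 1) :
    ∃ T₁ : ℝ, 1 < T₁ ∧ ∀ t₀ : ℝ, T₁ ≤ t₀ →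
      ∀ d : Fin m → ℂ,
        (∀ l, K⁻¹.mulVec d l ∈
          (fun ρ : ℝ => ((t₀ ^ (ρ - 1) : ℝ) : ℂ) *
            mittagLeffler2 ρ (lam l * ((t₀ ^ ρ : ℝ) : ℂ))) '' Set.Ico β₀ 1) →
        ∃! B : Fin m → ℝ, (∀ l, B l ∈ Set.Icc β₀ 1) ∧
          ∀ j, ∑ l, K j l * ((t₀ ^ (B l - 1) : ℝ) : ℂ) *
            mittagLeffler2 (B l) (lam l * ((t₀ ^ (B l) : ℝ) : ℂ)) = d j := by
  have hev : ∀ᶠ t : ℝ in Filter.atTop, ∀ l : Fin m,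
      Set.InjOn (fun ρ : ℝ => ((t ^ (ρ - 1) : ℝ) : ℂ) *
            mittagLeffler2 ρ (lam l * ((t ^ ρ : ℝ) : ℂ))) (Set.Icc β₀ 1) :=
    Filter.eventually_all.2 fun l => RL_inj (lam l) (hlam l) β₀ hβ₀ hβ₀1
  obtain ⟨T, hT⟩ := Filter.eventually_atTop.1 hev
  refine ⟨max T 2, lt_max_of_lt_right one_lt_two, fun t ht d hd => ?_⟩
  have hinj := hT t ((le_max_left _ _).trans ht)
  choose B hB hBd using hd
  have hdet : IsUnit K.det := (Matrix.isUnit_iff_isUnit_det K).1 hK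
  have hBd' : (fun l => ((t ^ (B l - 1) : ℝ) : ℂ) *
      mittagLeffler2 (B l) (lam l * ((t ^ (B l) : ℝ) : ℂ))) = K⁻¹.mulVec d := funext hBd
  refine ⟨B, ⟨fun l => Set.Ico_subset_Icc_self (hB l), fun j => ?_⟩, ?_⟩
  · have h : K.mulVec (K⁻¹.mulVec d) = d := by
      rw [Matrix.mulVec_mulVec, Matrix.mul_nonsing_inv _ hdet, Matrix.one_mulVec]
    rw [← hBd'] at h
    have h2 := congrFun h j
    simp only [Matrix.mulVec, dotProduct, ← mul_assoc] at h2
    exact h2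
  · rintro B' ⟨hB', hs⟩
    have h : K.mulVec (fun l => ((t ^ (B' l - 1) : ℝ) : ℂ) *
      mittagLeffler2 (B' l) (lam l * ((t ^ (B' l) : ℝ) : ℂ))) = d := by
      funext j
      simp only [Matrix.mulVec, dotProduct, ← mul_assoc]
      exact hs j
    have h2 := congrArg K⁻¹.mulVec h
    rw [Matrix.mulVec_mulVec, Matrix.nonsing_inv_mul _ hdet, Matrix.one_mulVec, ← hBd'] at h2
    funext l
    exact hinj l (hB' l) (Set.Ico_subset_Icc_self (hB l)) (congrFun h2 l)
end
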